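/- arXiv:2309.15398 — 2 statements merged into one kernel-verified Lean document; each statement's English description precedes it below -/
import Mathlib

section
/- Suppose K ≠ ∅ and Ideal(c_eq)+QM(c_in) is archimedean. If the LICQC, SCC and SOSC hold at every global minimizer of the polynomial optimization problem (POP): minimize f(x) subject to x ∈ K, then there exists k1 ∈ ℕ such that for every k ≥ k1, every minimizer of the kth moment relaxation of (POP) has a flat truncation. -/
open MvPolynomial MeasureTheory

noncomputable section

/-- The space of real polynomials in `n` variables. -/
abbrev RPoly (n : ℕ) : Type := MvPolynomial (Fin n) ℝ

/-- The degree `|α|` of a monomial power `α`. -/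
def mdeg {n : ℕ} (α : Fin n →₀ ℕ) : ℕ := ∑ i, α i

/-- `p` is a sum of squares of polynomials. -/
def IsSOS {n : ℕ} (p : RPoly n) : Prop :=
  ∃ L : List (RPoly n), p = (L.map (fun q => q ^ 2)).sum

/-- The truncation `QM(g)_k` of the quadratic module generated by `(g j)_{j ∈ S}`. -/
def QModDeg {n : ℕ} {κ : Type} (S : Finset κ) (g : κ → RPoly n) (k : ℕ) :
    Set (RPoly n) :=
  {p | ∃ σ0 : RPoly n, ∃ σ : κ → RPoly n,
      IsSOS σ0 ∧ σ0.totalDegree ≤ k ∧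
      (∀ j ∈ S, IsSOS (σ j) ∧ (σ j).totalDegree + (g j).totalDegree ≤ k) ∧
      p = σ0 + ∑ j ∈ S, g j * σ j}

/-- The truncation `Ideal(h)_k` of the ideal generated by `(h j)_{j ∈ S}`. -/
def IdealDeg {n : ℕ} {ι : Type} (S : Finset ι) (h : ι → RPoly n) (k : ℕ) :
    Set (RPoly n) :=
  {p | ∃ q : ι → RPoly n,
      (∀ j ∈ S, (q j).totalDegree + (h j).totalDegree ≤ k) ∧
      p = ∑ j ∈ S, h j * q j}

/-- The quadratic module `QM(g)` generated by `(g j)_{j ∈ S}`. -/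
def QModFull {n : ℕ} {κ : Type} (S : Finset κ) (g : κ → RPoly n) : Set (RPoly n) :=
  {p | ∃ σ0 : RPoly n, ∃ σ : κ → RPoly n,
      IsSOS σ0 ∧ (∀ j ∈ S, IsSOS (σ j)) ∧ p = σ0 + ∑ j ∈ S, g j * σ j}

/-- The ideal `Ideal(h)` generated by `(h j)_{j ∈ S}`. -/
def IdealFull {n : ℕ} {ι : Type} (S : Finset ι) (h : ι → RPoly n) : Set (RPoly n) :=
  (Ideal.span (h '' (S : Set ι)) : Ideal (RPoly n))

/-- `Ideal(c_eq) + QM(c_in)` is archimedean. -/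
def ArchimedeanQM {n : ℕ} (E I : Finset ℕ) (c : ℕ → RPoly n) : Prop :=
  ∃ R : ℝ, 0 < R ∧ ∃ p1 ∈ IdealFull E c, ∃ p2 ∈ QModFull I c,
    (C R : RPoly n) - ∑ i, (X i : RPoly n) ^ 2 = p1 + p2

/-- The basic closed semialgebraic set `K`. -/
def Kset {n : ℕ} (E I : Finset ℕ) (c : ℕ → RPoly n) : Set (Fin n → ℝ) :=
  {x | (∀ j ∈ E, eval x (c j) = 0) ∧ (∀ j ∈ I, 0 ≤ eval x (c j))}

/-- The bilinear pairing `⟨p, y⟩ = ∑_α p_α y_α`. -/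
def pairing {n : ℕ} (p : RPoly n) (y : (Fin n →₀ ℕ) → ℝ) : ℝ :=
  ∑ α ∈ p.support, p.coeff α * y α

/-- Membership in the moment cone `ℛ_d(K)`: the entries `y_α`, `|α| ≤ d`, are the
moments of a finite Borel measure supported in the closed set `K`. -/
def InMomentCone {n : ℕ} (d : ℕ) (K : Set (Fin n → ℝ)) (y : (Fin n →₀ ℕ) → ℝ) : Prop :=
  ∃ μ : Measure (Fin n → ℝ), IsFiniteMeasure μ ∧ μ Kᶜ = 0 ∧
    ∀ α : Fin n →₀ ℕ, mdeg α ≤ d →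
      Integrable (fun x => ∏ i, x i ^ α i) μ ∧
      y α = ∫ x, (∏ i, x i ^ α i) ∂μ

/-- The cone `P_d(K)` of polynomials of degree at most `d` that are nonnegative on `K`. -/
def PdCone {n : ℕ} (d : ℕ) (K : Set (Fin n → ℝ)) : Set (RPoly n) :=
  {p | p.totalDegree ≤ d ∧ ∀ x ∈ K, 0 ≤ eval x p}

/-- The interior of `P_d(K)` in the coefficient topology of `ℝ[x]_d`. -/
def PdInterior {n : ℕ} (d : ℕ) (K : Set (Fin n → ℝ)) : Set (RPoly n) :=
  {p | p.totalDegree ≤ d ∧ ∃ ε : ℝ, 0 < ε ∧ ∀ q : RPoly n, q.totalDegree ≤ d →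
      (∀ α : Fin n →₀ ℕ, |q.coeff α - p.coeff α| ≤ ε) → ∀ x ∈ K, 0 ≤ eval x q}

instance degLEFintype (n t : ℕ) : Fintype {α : Fin n →₀ ℕ // mdeg α ≤ t} := by
  apply Fintype.ofInjective
    (fun a : {α : Fin n →₀ ℕ // mdeg α ≤ t} =>
      (fun i => (⟨a.1 i, by
        have h1 : a.1 i ≤ mdeg a.1 :=
          Finset.single_le_sum (fun j _ => Nat.zero_le _) (Finset.mem_univ i)
        exact Nat.lt_succ_of_le (le_trans h1 a.2)⟩ : Fin (t + 1))) :
        {α : Fin n →₀ ℕ // mdeg α ≤ t} → (Fin n → Fin (t + 1)))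
  intro a b hab
  apply Subtype.ext
  ext i
  exact congrArg Fin.val (congrFun hab i)

/-- The moment matrix `M_t[w]`, indexed by monomial powers of degree at most `t`. -/
def momentMatrix {n : ℕ} (t : ℕ) (w : (Fin n →₀ ℕ) → ℝ) :
    Matrix {α : Fin n →₀ ℕ // mdeg α ≤ t} {α : Fin n →₀ ℕ // mdeg α ≤ t} ℝ :=
  fun α β => w (α.1 + β.1)

/-- `w` admits a flat truncation: for some `d0 ≤ t ≤ k`,
`rank M_{t-dK}[w] = rank M_t[w]`. -/
def HasFlatTruncation {n : ℕ} (d0 dK k : ℕ) (w : (Fin n →₀ ℕ) → ℝ) : Prop :=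
  ∃ t : ℕ, d0 ≤ t ∧ t ≤ k ∧
    (momentMatrix (t - dK) w).rank = (momentMatrix t w).rank

/-- The gradient of a polynomial at a point. -/
def gradP {n : ℕ} (p : RPoly n) (u : Fin n → ℝ) : Fin n → ℝ :=
  fun i => eval u (pderiv i p)

/-- The Hessian of a polynomial at a point. -/
def hessP {n : ℕ} (p : RPoly n) (u : Fin n → ℝ) : Fin n → Fin n → ℝ :=
  fun i j => eval u (pderiv i (pderiv j p))

/-- The classical optimality conditions (LICQC, KKT with SCC and SOSC) at the point `u`
for the problem: minimize `F` subject to `ge j = 0` (`j ∈ Es`), `gi j ≥ 0` (`j ∈ Is`). -/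
def OptCondsAt {n : ℕ} {ι κ : Type}
    (Es : Finset ι) (ge : ι → RPoly n) (Is : Finset κ) (gi : κ → RPoly n)
    (F : RPoly n) (u : Fin n → ℝ) : Prop :=
  -- LICQC: gradients of active constraints are linearly independent
  LinearIndependent ℝ
    (Sum.elim
      (fun j : {j : ι // j ∈ Es ∧ eval u (ge j) = 0} => gradP (ge j.1) u)
      (fun j : {j : κ // j ∈ Is ∧ eval u (gi j) = 0} => gradP (gi j.1) u)) ∧
  ∃ (lamE : ι → ℝ) (lamI : κ → ℝ),
    -- KKT stationarity
    (gradP F u =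
      (∑ j ∈ Es, lamE j • gradP (ge j) u) + ∑ j ∈ Is, lamI j • gradP (gi j) u) ∧
    (∀ j ∈ Is, 0 ≤ lamI j ∧ lamI j * eval u (gi j) = 0) ∧
    -- SCC
    (∀ j ∈ Is, 0 < lamI j + eval u (gi j)) ∧
    -- SOSC
    (∀ v : Fin n → ℝ, v ≠ 0 →
      (∀ j ∈ Es, (∑ i, v i * gradP (ge j) u i) = 0) →
      (∀ j ∈ Is, eval u (gi j) = 0 → (∑ i, v i * gradP (gi j) u i) = 0) →
      0 < ∑ i, ∑ i', v i *
        ((hessP F u i i' - ∑ j ∈ Es, lamE j * hessP (ge j) u i i')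
          - ∑ j ∈ Is, lamI j * hessP (gi j) u i i') * v i')

/-- The degree-`ℓ` homogenization `x_0^ℓ p(x/x_0)` of `p`; the new variable `x_0`
is the variable of index `0` in `Fin (n+1)`. -/
def homogAux {n : ℕ} (ℓ : ℕ) (p : RPoly n) : RPoly (n + 1) :=
  ∑ α ∈ p.support,
    monomial
      (Finsupp.single (0 : Fin (n + 1)) (ℓ - mdeg α) + Finsupp.mapDomain Fin.succ α)
      (p.coeff α)

/-- The homogenization `p̃` of `p`. -/
def homogenize {n : ℕ} (p : RPoly n) : RPoly (n + 1) := homogAux p.totalDegree p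

/-- The polynomial `‖x̃‖² - 1`. -/
def sphereP (n : ℕ) : RPoly (n + 1) := (∑ i, (X i : RPoly (n + 1)) ^ 2) - 1

/-- The homogenization `K̃` of the set `K`. -/
def Khom {n : ℕ} (E I : Finset ℕ) (c : ℕ → RPoly n) : Set (Fin (n + 1) → ℝ) :=
  {x | (∀ j ∈ E, eval x (homogenize (c j)) = 0) ∧
       (∀ j ∈ I, 0 ≤ eval x (homogenize (c j))) ∧
       (∑ i, (x i) ^ 2) = 1 ∧ 0 ≤ x 0}

/-- `K` is closed at infinity. -/
def ClosedAtInfinity {n : ℕ} (E I : Finset ℕ) (c : ℕ → RPoly n) : Prop :=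
  Khom E I c = closure (Khom E I c ∩ {x | 0 < x 0})

/-- The tuple `c̃_eq`: the homogenizations `c̃_j` together with `‖x̃‖² - 1`
(the latter indexed by `none`). -/
def gEqH {n : ℕ} (c : ℕ → RPoly n) : Option ℕ → RPoly (n + 1) :=
  fun o => o.elim (sphereP n) (fun j => homogenize (c j))

/-- The tuple `c̃_in`: the homogenizations `c̃_j` together with `x_0`
(the latter indexed by `none`). -/
def gInH {n : ℕ} (c : ℕ → RPoly n) : Option ℕ → RPoly (n + 1) :=
  fun o => o.elim (X 0) (fun j => homogenize (c j))

/-- The index set of a tuple extended by one extra entry (indexed by `none`). -/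
def OS (S : Finset ℕ) : Finset (Option ℕ) := insert none (S.image some)

/-- Feasibility of `θ` for the linear conic problem (P). -/
def PFeas {n m : ℕ} (m1 d : ℕ) (f : RPoly n) (a : Fin m → RPoly n)
    (K : Set (Fin n → ℝ)) (θ : Fin m → ℝ) : Prop :=
  (∀ i : Fin m, m1 ≤ (i : ℕ) → 0 ≤ θ i) ∧ (f - ∑ i, C (θ i) * a i) ∈ PdCone d K

/-- The optimal value `ϑ*` of the linear conic problem (P). -/
def PVal {n m : ℕ} (m1 d : ℕ) (f : RPoly n) (a : Fin m → RPoly n) (b : Fin m → ℝ)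
    (K : Set (Fin n → ℝ)) : ℝ :=
  sSup {v : ℝ | ∃ θ : Fin m → ℝ, PFeas m1 d f a K θ ∧ v = ∑ i, b i * θ i}

/-- Feasibility of `y` for the generalized moment problem (M). -/
def MFeas {n m : ℕ} (m1 d : ℕ) (a : Fin m → RPoly n) (b : Fin m → ℝ)
    (K : Set (Fin n → ℝ)) (y : (Fin n →₀ ℕ) → ℝ) : Prop :=
  InMomentCone d K y ∧
  (∀ i : Fin m, (i : ℕ) < m1 → pairing (a i) y = b i) ∧
  (∀ i : Fin m, m1 ≤ (i : ℕ) → b i ≤ pairing (a i) y)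

/-- The optimal value `φ*` of the generalized moment problem (M). -/
def MVal {n m : ℕ} (m1 d : ℕ) (f : RPoly n) (a : Fin m → RPoly n) (b : Fin m → ℝ)
    (K : Set (Fin n → ℝ)) : ℝ :=
  sInf {v : ℝ | ∃ y : (Fin n →₀ ℕ) → ℝ, MFeas m1 d a b K y ∧ v = pairing f y}

/-- The optimal value `ϑ_k` of the `k`th SOS relaxation of (P). -/
def SOSRelaxVal {n m : ℕ} {ι κ : Type} (m1 : ℕ) (f : RPoly n) (a : Fin m → RPoly n)
    (b : Fin m → ℝ) (Es : Finset ι) (ge : ι → RPoly n) (Is : Finset κ) (gi : κ → RPoly n)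
    (k : ℕ) : ℝ :=
  sSup {v : ℝ | ∃ θ : Fin m → ℝ, (∀ i : Fin m, m1 ≤ (i : ℕ) → 0 ≤ θ i) ∧
      (∃ p1 ∈ IdealDeg Es ge (2 * k), ∃ p2 ∈ QModDeg Is gi (2 * k),
        f - ∑ i, C (θ i) * a i = p1 + p2) ∧
      v = ∑ i, b i * θ i}

/-- The semidefinite constraints of the `k`th moment relaxation:
the localizing vectors of the equality constraints vanish, and the localizing
matrices of the inequality constraints and the moment matrix are positive
semidefinite (stated equivalently via the associated quadratic forms). -/
def MomRelaxPSD {n : ℕ} {ι κ : Type} (Es : Finset ι) (ge : ι → RPoly n)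
    (Is : Finset κ) (gi : κ → RPoly n) (k : ℕ) (w : (Fin n →₀ ℕ) → ℝ) : Prop :=
  (∀ j ∈ Es, ∀ p : RPoly n, p.totalDegree + (ge j).totalDegree ≤ 2 * k →
      pairing (ge j * p) w = 0) ∧
  (∀ j ∈ Is, ∀ p : RPoly n, p.totalDegree + ((gi j).totalDegree + 1) / 2 ≤ k →
      0 ≤ pairing (gi j * p ^ 2) w) ∧
  (∀ p : RPoly n, p.totalDegree ≤ k → 0 ≤ pairing (p ^ 2) w)

/-- Feasibility of `w` for the `k`th moment relaxation of (M). -/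
def GMomFeas {n m : ℕ} {ι κ : Type} (m1 : ℕ) (a : Fin m → RPoly n) (b : Fin m → ℝ)
    (Es : Finset ι) (ge : ι → RPoly n) (Is : Finset κ) (gi : κ → RPoly n) (k : ℕ)
    (w : (Fin n →₀ ℕ) → ℝ) : Prop :=
  (∀ i : Fin m, (i : ℕ) < m1 → pairing (a i) w = b i) ∧
  (∀ i : Fin m, m1 ≤ (i : ℕ) → b i ≤ pairing (a i) w) ∧
  MomRelaxPSD Es ge Is gi k w

/-- The optimal value `φ_k` of the `k`th moment relaxation of (M). -/
def GMomVal {n m : ℕ} {ι κ : Type} (m1 : ℕ) (f : RPoly n) (a : Fin m → RPoly n)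
    (b : Fin m → ℝ) (Es : Finset ι) (ge : ι → RPoly n) (Is : Finset κ) (gi : κ → RPoly n)
    (k : ℕ) : ℝ :=
  sInf {v : ℝ | ∃ w : (Fin n →₀ ℕ) → ℝ,
      GMomFeas m1 a b Es ge Is gi k w ∧ v = pairing f w}

/-- The optimal value `f_k^den` of the `k`th order relaxation with denominators. -/
def DenRelaxVal {n : ℕ} (E I : Finset ℕ) (c : ℕ → RPoly n) (f : RPoly n) (d k : ℕ) : ℝ :=
  sSup {γ : ℝ | ∃ p1 ∈ IdealDeg E c (2 * k + d), ∃ p2 ∈ QModDeg I c (2 * k + d),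
      (1 + ∑ i, (X i : RPoly n) ^ 2) ^ k * (f - C γ) = p1 + p2}


/-- The degree bound `d_K = max_j ⌈deg(c_j)/2⌉`. -/
def dKOrig {n : ℕ} (E I : Finset ℕ) (c : ℕ → RPoly n) : ℕ :=
  (E ∪ I).sup fun j => ((c j).totalDegree + 1) / 2

/-- The degree bound `d_0` for the GMP relaxations. -/
def d0GMP {n m : ℕ} (f : RPoly n) (a : Fin m → RPoly n) (E I : Finset ℕ)
    (c : ℕ → RPoly n) : ℕ :=
  max ((f.totalDegree + 1) / 2)
    (max (dKOrig E I c) (Finset.univ.sup fun i : Fin m => ((a i).totalDegree + 1) / 2))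

/-- The degree bound `d̃_K` for the homogenized constraining tuples. -/
def dKHom {n : ℕ} (E I : Finset ℕ) (c : ℕ → RPoly n) : ℕ :=
  max ((OS E).sup fun o => ((gEqH c o).totalDegree + 1) / 2)
      ((OS I).sup fun o => ((gInH c o).totalDegree + 1) / 2)

end

/-!
Let `γ` be the minimum of `f` on `K` and `Q = Ideal(c_eq) + QM(c_in)`. The heart of the matter is
that for every polynomial `p` vanishing on the (finitely many) minimizers there is `ε > 0` with
`f - γ - ε p² ∈ Q`.

At a minimizer `u`, strict complementarity allows the Lagrange multipliers to be perturbed into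
polynomial multipliers that add a large multiple of the squared constraint gradients to the
Hessian, so that `F = f - γ - ∑ c_j s_j² - ∑ c_j φ_j` has a positive definite Hessian at `u`. The
local multipliers are glued by the Chinese remainder theorem, and multiplying the `s_j` by a high
power of a polynomial that is `1` to second order at the minimizers and less than `1` elsewhere on
`K` makes `F` positive on the rest of `K`.

Let `I` be the ideal of the set of minimizers and `θ` the sum of the squares of generators of `I`,
an order unit of `I²` for the cone `Q ∩ I²`. If no `F - ε θ` were in `Q`, some pure state `φ` of
`I²` would satisfy `φ F ≤ 0`. A pure state is multiplicative, `φ (a g) = a(x) φ g` for a point `x`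
of `K`. If `x` is not a minimizer this contradicts `F(x) > 0`. If it is, then `φ` kills the cube of
the ideal of `x`, modulo which `F` is the sum of the squares of generators of that ideal, and
Cauchy–Schwarz forces `φ = 0`.

Applying a minimizer `w` of a high relaxation to the certificate gives `⟨p², w⟩ ≤ 0`. Every monomial
differs from an interpolant of bounded degree by such a `p`, so modulo the kernel of the moment
form all monomials are represented in bounded degree, which is flatness.
-/

section States

variable {V : Type*} [AddCommGroup V] [Module ℝ V]

/-- `e` is an order unit for the ordering of `V` defined by the cone `P`. -/
def IsOrderUnit (P : PointedCone ℝ V) (e : V) : Prop :=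
  ∀ v : V, ∃ N : ℝ, N • e - v ∈ P

/-- The states of the ordered vector space `(V, P)` normalized at `e`. They are viewed inside
`V → ℝ`, so that the state space carries the topology of pointwise convergence. -/
def stateSpace (P : PointedCone ℝ V) (e : V) : Set (V → ℝ) :=
  {φ | φ ∈ Set.range ((⇑) : (V →ₗ[ℝ] ℝ) → V → ℝ) ∧ (∀ v ∈ P, 0 ≤ φ v) ∧ φ e = 1}

variable {P : PointedCone ℝ V} {e : V}

theorem coe_mem_stateSpace {φ : V →ₗ[ℝ] ℝ} :
    ⇑φ ∈ stateSpace P e ↔ (∀ v ∈ P, 0 ≤ φ v) ∧ φ e = 1 :=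
  and_iff_right ⟨φ, rfl⟩

theorem isClosed_stateSpace : IsClosed (stateSpace P e) := by
  have nonneg : IsClosed {φ : V → ℝ | ∀ v ∈ P, 0 ≤ φ v} := by
    simp only [Set.ofPred_forall]
    exact isClosed_biInter fun v _ => isClosed_le continuous_const (continuous_apply v)
  exact (LinearMap.isClosed_range_coe V ℝ (RingHom.id ℝ)).inter
    (nonneg.inter (isClosed_eq (continuous_apply e) continuous_const))

theorem IsOrderUnit.isCompact_stateSpace (he : IsOrderUnit P e) :
    IsCompact (stateSpace P e) := by
  choose N hN using he
  refine (isCompact_univ_pi fun v => isCompact_Icc (a := -N (-v)) (b := N v)).of_isClosed_subset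
    isClosed_stateSpace ?_
  rintro _ ⟨⟨φ, rfl⟩, hφ, hφe⟩ v -
  have le_N : ∀ v, φ v ≤ N v := fun v => by
    simpa only [map_sub, map_smul, hφe, smul_eq_mul, mul_one, sub_nonneg] using hφ _ (hN v)
  have := le_N (-v)
  rw [map_neg] at this
  exact ⟨by linarith, le_N v⟩

theorem IsOrderUnit.nonneg_of_smul_add_smul_mem (he : IsOrderUnit P e) {F : V}
    (hF : ∀ ε : ℝ, 0 < ε → F - ε • e ∉ P) {t r : ℝ} (hr : 0 ≤ r) (h : t • e + r • F ∈ P) :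
    0 ≤ t := by
  by_contra! ht
  obtain ⟨N, hN⟩ := he (-F)
  obtain ⟨δ, hδ, hδN⟩ : ∃ δ : ℝ, 0 < δ ∧ t + δ * N < 0 := by
    refine ⟨-t / (|N| + 1), div_pos (neg_pos.2 ht) (by positivity), ?_⟩
    have : -t / (|N| + 1) * (|N| + 1) = -t := div_mul_cancel₀ _ (by positivity)
    nlinarith [le_abs_self N, div_pos (neg_pos.2 ht) (by positivity : 0 < |N| + 1)]
  have hrδ : 0 < r + δ := by positivity
  refine hF (-(t + δ * N) / (r + δ)) (div_pos (neg_pos.2 hδN) hrδ) ?_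
  have mem := P.smul_mem (inv_nonneg.2 hrδ.le) (P.add_mem h (P.smul_mem hδ.le hN))
  convert mem using 1
  match_scalars <;> field_simp

theorem IsOrderUnit.exists_state_apply_nonpos (he : IsOrderUnit P e) {F : V}
    (hF : ∀ ε : ℝ, 0 < ε → F - ε • e ∉ P) :
    ∃ φ : V →ₗ[ℝ] ℝ, ⇑φ ∈ stateSpace P e ∧ φ F ≤ 0 := by
  have he0 : e ≠ 0 := by
    rintro rfl
    exact absurd (he.nonneg_of_smul_add_smul_mem hF (t := -1) le_rfl (by simp)) (by norm_num)
  let P' : PointedCone ℝ V := P ⊔ PointedCone.hull ℝ {-F}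
  let ℓ : V →ₗ.[ℝ] ℝ := LinearPMap.mkSpanSingleton e 1 he0
  have ℓ_nonneg : ∀ x : ℓ.domain, (x : V) ∈ P' → 0 ≤ ℓ x := by
    rintro ⟨x, hx⟩ hxP
    obtain ⟨t, rfl⟩ := Submodule.mem_span_singleton.1 hx
    obtain ⟨q, hq, y, hy, hqy⟩ := Submodule.mem_sup.1 hxP
    obtain ⟨⟨r, hr⟩, rfl⟩ := Submodule.mem_span_singleton.1 hy
    have : ℓ ⟨t • e, hx⟩ = t • 1 := LinearPMap.mkSpanSingleton'_apply e (1 : ℝ) _ t hx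
    rw [this, smul_eq_mul, mul_one]
    refine he.nonneg_of_smul_add_smul_mem hF hr ?_
    have : q = t • e + r • F := by
      rw [← sub_eq_of_eq_add hqy.symm, Nonneg.mk_smul, smul_neg, sub_neg_eq_add]
    rwa [← this]
  have ℓ_dense : ∀ y, ∃ x : ℓ.domain, (x : V) + y ∈ P' := fun y => by
    obtain ⟨N, hN⟩ := he (-y)
    rw [sub_neg_eq_add] at hN
    exact ⟨⟨N • e, Submodule.mem_span_singleton.2 ⟨N, rfl⟩⟩, Submodule.mem_sup_left hN⟩
  obtain ⟨φ, hφℓ, hφ⟩ := riesz_extension P' ℓ ℓ_nonneg ℓ_dense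
  refine ⟨φ, coe_mem_stateSpace.2 ⟨fun v hv => hφ v (Submodule.mem_sup_left hv), ?_⟩, ?_⟩
  · exact (hφℓ ⟨e, Submodule.mem_span_singleton_self e⟩).trans
      (LinearPMap.mkSpanSingleton_apply ℝ ℝ he0 1)
  · simpa using hφ (-F) (Submodule.mem_sup_right (Submodule.mem_span_singleton_self _))

theorem IsOrderUnit.exists_pure_state_apply_nonpos (he : IsOrderUnit P e) {F : V}
    (hF : ∀ ε : ℝ, 0 < ε → F - ε • e ∉ P) :
    ∃ φ : V →ₗ[ℝ] ℝ, ⇑φ ∈ (stateSpace P e).extremePoints ℝ ∧ φ F ≤ 0 := by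
  obtain ⟨ψ, hψ, hψF⟩ := he.exists_state_apply_nonpos hF
  let evalF : StrongDual ℝ (V → ℝ) := -ContinuousLinearMap.proj (R := ℝ) F
  have compact := he.isCompact_stateSpace
  have exposed : IsExposed ℝ (stateSpace P e) (evalF.toExposed (stateSpace P e)) :=
    ContinuousLinearMap.toExposed.isExposed
  obtain ⟨φ₀, hφ₀, hmax⟩ := compact.exists_isMaxOn ⟨_, hψ⟩ evalF.continuous.continuousOn
  obtain ⟨φ, hφ⟩ := (exposed.isCompact compact).extremePoints_nonempty ⟨φ₀, hφ₀, hmax⟩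
  have hφF : φ F ≤ ψ F := neg_le_neg_iff.1 ((extremePoints_subset hφ).2 _ hψ)
  have extreme := exposed.isExtreme.extremePoints_subset_extremePoints hφ
  obtain ⟨φ, rfl⟩ := (extremePoints_subset extreme).1
  exact ⟨φ, extreme, hφF.trans hψF⟩

theorem eq_smul_of_mem_extremePoints_stateSpace {φ ψ : V →ₗ[ℝ] ℝ}
    (hφ : ⇑φ ∈ (stateSpace P e).extremePoints ℝ) (hψ : ∀ v ∈ P, 0 ≤ ψ v)
    (hψφ : ∀ v ∈ P, ψ v ≤ φ v) (hpos : 0 < ψ e) (hlt : ψ e < 1) : ψ = ψ e • φ := by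
  have hφe : φ e = 1 := (extremePoints_subset hφ).2.2
  have hsub : 0 < 1 - ψ e := sub_pos.2 hlt
  have left : ⇑((ψ e)⁻¹ • ψ) ∈ stateSpace P e :=
    coe_mem_stateSpace.2
      ⟨fun v hv => mul_nonneg (inv_nonneg.2 hpos.le) (hψ v hv), inv_mul_cancel₀ hpos.ne'⟩
  have right : ⇑((1 - ψ e)⁻¹ • (φ - ψ)) ∈ stateSpace P e :=
    coe_mem_stateSpace.2
      ⟨fun v hv => mul_nonneg (inv_nonneg.2 hsub.le) (sub_nonneg.2 (hψφ v hv)), by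
        simp only [LinearMap.smul_apply, LinearMap.sub_apply, hφe, smul_eq_mul]
        exact inv_mul_cancel₀ hsub.ne'⟩
  have key := ((mem_extremePoints_iff_left.1 hφ).2 _ left _ right
    ⟨ψ e, 1 - ψ e, hpos, hsub, by ring, by
      rw [← LinearMap.coe_smul, ← LinearMap.coe_smul, smul_inv_smul₀ hpos.ne',
        smul_inv_smul₀ hsub.ne']
      exact add_sub_cancel ⇑ψ ⇑φ⟩)
  rw [← DFunLike.coe_injective key, smul_inv_smul₀ hpos.ne']

end States

theorem le_mul_of_sq_le_mul_of_le_geometric {a : ℕ → ℝ} {N R : ℝ} (hR : 0 < R)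
    (ha : ∀ k, 0 ≤ a k) (hsq : ∀ k, a k ^ 2 ≤ a 0 * a (2 * k)) (hgeom : ∀ k, a k ≤ N * R ^ k) :
    a 1 ≤ R * a 0 := by
  rcases (ha 0).eq_or_lt with h0 | h0
  · have := hsq 1
    rw [← h0] at this ⊢
    nlinarith [ha 1]
  by_contra! hlt
  set r := a 1 / (R * a 0) with hr
  have one_lt_r : 1 < r := (one_lt_div (by positivity)).2 hlt
  have lower : ∀ j : ℕ, a 0 * r ^ 2 ^ j * R ^ 2 ^ j ≤ a (2 ^ j) := by
    intro j
    induction j with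
    | zero =>
      rw [pow_zero, pow_one, pow_one, hr]
      field_simp
      exact le_rfl
    | succ j ih =>
      have square : (a 0 * r ^ 2 ^ j * R ^ 2 ^ j) ^ 2 ≤ a (2 ^ j) ^ 2 :=
        pow_le_pow_left₀ (by positivity) ih 2
      refine le_of_mul_le_mul_left ?_ h0
      calc a 0 * (a 0 * r ^ 2 ^ (j + 1) * R ^ 2 ^ (j + 1))
          = (a 0 * r ^ 2 ^ j * R ^ 2 ^ j) ^ 2 := by ring
        _ ≤ a 0 * a (2 * 2 ^ j) := square.trans (hsq _)
        _ = a 0 * a (2 ^ (j + 1)) := by rw [pow_succ']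
  have bounded : ∀ j : ℕ, a 0 * r ^ 2 ^ j ≤ N := fun j =>
    le_of_mul_le_mul_right ((lower j).trans (hgeom _)) (by positivity)
  obtain ⟨m, hm⟩ := pow_unbounded_of_one_lt (N / a 0) one_lt_r
  rw [div_lt_iff₀' h0] at hm
  refine hm.not_ge (le_trans ?_ (bounded m))
  gcongr
  exacts [one_lt_r.le, Nat.lt_two_pow_self.le]

theorem sq_apply_mul_le {A : Type*} [CommRing A] [Algebra ℝ A] {W : Submodule ℝ A}
    {φ : A →ₗ[ℝ] ℝ} (hφ : ∀ a ∈ W, 0 ≤ φ (a ^ 2)) {a b : A} (ha : a ∈ W) (hb : b ∈ W) :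
    φ (a * b) ^ 2 ≤ φ (a ^ 2) * φ (b ^ 2) := by
  let B : LinearMap.BilinForm ℝ W := ((LinearMap.mul ℝ A).compr₂ φ).domRestrict₁₂ W W
  have hB : ∀ a b : W, B a b = φ (a * b) := fun _ _ => rfl
  have symm : LinearMap.IsSymm B := ⟨fun a b => by simp only [hB, mul_comm, RingHom.id_apply]⟩
  have key := B.apply_sq_le_of_symm (fun a => by rw [hB, ← sq]; exact hφ a a.2) symm ⟨a, ha⟩ ⟨b, hb⟩
  rwa [hB, hB, hB, ← sq, ← sq] at key

section PureStatesOnModules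

variable {A M : Type*} [CommRing A] [AddCommGroup M] [Module ℝ M] [Module A M]

variable (A) in
/-- An order unit `e` of an ordered `A`-module such that every orbit `m ↦ a ^ (2 * m) • g` grows at
most geometrically when measured in multiples of `e`, with a rate depending only on `a`. This is
the boundedness that makes multiplication by `a` a bounded operator in every state. -/
def IsGrowthUnit (P : PointedCone ℝ M) (e : M) : Prop :=
  ∀ a : A, ∃ R : ℝ, 0 < R ∧ ∀ g : M, ∃ N : ℝ, ∀ m : ℕ, (N * R ^ m) • e - a ^ (2 * m) • g ∈ P

variable {P : PointedCone ℝ M} {e : M}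

theorem IsGrowthUnit.isOrderUnit (he : IsGrowthUnit A P e) : IsOrderUnit P e := fun g => by
  obtain ⟨R, -, hR⟩ := he 0
  obtain ⟨N, hN⟩ := hR g
  exact ⟨N, by simpa using hN 0⟩

variable [Algebra ℝ A] [IsScalarTower ℝ A M]

theorem IsGrowthUnit.exists_abs_apply_smul_le (he : IsGrowthUnit A P e)
    (hsq : ∀ (a : A), ∀ g ∈ P, a ^ 2 • g ∈ P) {φ : M →ₗ[ℝ] ℝ} (hφ : ⇑φ ∈ stateSpace P e) (a : A) :
    ∃ s : ℝ, 0 < s ∧ ∀ g ∈ P, |φ (a • g)| ≤ s * φ g := by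
  obtain ⟨hφP, hφe⟩ := coe_mem_stateSpace.1 hφ
  obtain ⟨R, hR, hgrowth⟩ := he a
  refine ⟨√R, Real.sqrt_pos.2 hR, fun g hg => ?_⟩
  have cauchy_schwarz : ∀ b c : A, φ ((b * c) • g) ^ 2 ≤ φ (b ^ 2 • g) * φ (c ^ 2 • g) :=
    fun b c => sq_apply_mul_le (W := ⊤)
      (φ := φ ∘ₗ (LinearMap.toSpanSingleton A M g).restrictScalars ℝ)
      (fun b _ => hφP _ (hsq b g hg)) Submodule.mem_top Submodule.mem_top
  have sq_le : φ (a ^ 2 • g) ≤ R * φ g := by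
    obtain ⟨N, hN⟩ := hgrowth g
    have orbit := le_mul_of_sq_le_mul_of_le_geometric (a := fun m => φ (a ^ (2 * m) • g)) (N := N)
      hR (fun m => by rw [mul_comm, pow_mul]; exact hφP _ (hsq _ g hg))
      (fun m => by simpa [← pow_mul, mul_comm, mul_left_comm] using cauchy_schwarz 1 (a ^ (2 * m)))
      (fun m => by simpa [hφe] using hφP _ (hN m))
    simpa using orbit
  refine abs_le_of_sq_le_sq ?_ (mul_nonneg (Real.sqrt_nonneg R) (hφP g hg))
  calc φ (a • g) ^ 2 ≤ φ (a ^ 2 • g) * φ g := by simpa using cauchy_schwarz a 1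
    _ ≤ R * φ g * φ g := mul_le_mul_of_nonneg_right sq_le (hφP g hg)
    _ = (√R * φ g) ^ 2 := by rw [mul_pow, Real.sq_sqrt hR.le]; ring

theorem IsGrowthUnit.apply_smul_of_mem_extremePoints (he : IsGrowthUnit A P e) (heP : e ∈ P)
    (hsq : ∀ (a : A), ∀ g ∈ P, a ^ 2 • g ∈ P) {φ : M →ₗ[ℝ] ℝ}
    (hφ : ⇑φ ∈ (stateSpace P e).extremePoints ℝ) (a : A) (g : M) :
    φ (a • g) = φ (a • e) * φ g := by
  obtain ⟨hφP, hφe⟩ := coe_mem_stateSpace.1 (extremePoints_subset hφ)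
  obtain ⟨s, hs, hbound⟩ := he.exists_abs_apply_smul_le hsq (extremePoints_subset hφ) a
  -- `ψ` is dominated by the pure state `φ`, hence a multiple of it.
  let ψ : M →ₗ[ℝ] ℝ := (1 / 2 : ℝ) • φ + (1 / (4 * s)) • φ ∘ₗ Algebra.lsmul ℝ ℝ M a
  have hψ : ∀ g, ψ g = φ g / 2 + φ (a • g) / (4 * s) := fun g => by
    change (1 / 2 : ℝ) * φ g + 1 / (4 * s) * φ (a • g) = _
    ring
  have small : ∀ g ∈ P, |φ (a • g) / (4 * s)| ≤ φ g / 4 := fun g hg => by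
    rw [abs_div, abs_of_pos (by positivity : 0 < 4 * s), div_le_iff₀ (by positivity)]
    linarith [hbound g hg]
  have small_e := abs_le.1 (small e heP)
  rw [hφe] at small_e
  have key := eq_smul_of_mem_extremePoints_stateSpace (ψ := ψ) hφ
    (fun g hg => by rw [hψ]; linarith [(abs_le.1 (small g hg)).1, hφP g hg])
    (fun g hg => by rw [hψ]; linarith [(abs_le.1 (small g hg)).2, hφP g hg])
    (by rw [hψ, hφe]; linarith) (by rw [hψ, hφe]; linarith)
  have key_g := LinearMap.congr_fun key g
  rw [LinearMap.smul_apply, hψ, hψ, hφe, smul_eq_mul] at key_g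
  field_simp at key_g
  linarith

theorem IsGrowthUnit.exists_character_of_forall_sub_smul_notMem (he : IsGrowthUnit A P e)
    (heP : e ∈ P) (hsq : ∀ (a : A), ∀ g ∈ P, a ^ 2 • g ∈ P) {F : M}
    (hF : ∀ ε : ℝ, 0 < ε → F - ε • e ∉ P) :
    ∃ (φ : M →ₗ[ℝ] ℝ) (χ : A →ₐ[ℝ] ℝ), (∀ g ∈ P, 0 ≤ φ g) ∧ φ e = 1 ∧ φ F ≤ 0 ∧
      ∀ (a : A) (g : M), φ (a • g) = χ a * φ g := by
  obtain ⟨φ, hφ, hφF⟩ := he.isOrderUnit.exists_pure_state_apply_nonpos hF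
  obtain ⟨hφP, hφe⟩ := coe_mem_stateSpace.1 (extremePoints_subset hφ)
  have mult := he.apply_smul_of_mem_extremePoints heP hsq hφ
  let χ : A →ₐ[ℝ] ℝ :=
    AlgHom.ofLinearMap (φ ∘ₗ (LinearMap.toSpanSingleton A M e).restrictScalars ℝ)
      (by simpa using hφe)
      (fun a b => by simpa [mul_smul] using mult a (b • e))
  exact ⟨φ, χ, hφP, hφe, hφF, mult⟩

end PureStatesOnModules

section QuadraticModules

variable {A : Type*} [CommRing A] [Algebra ℝ A]

/-- A quadratic module of the real algebra `A`; since `A` contains the square roots of the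
nonnegative reals it is automatically a convex cone, and it is given as one. -/
structure IsQuadraticModule (Q : PointedCone ℝ A) : Prop where
  one_mem : 1 ∈ Q
  sq_mul_mem : ∀ (a : A), ∀ q ∈ Q, a ^ 2 * q ∈ Q

/-- The square of `a` is bounded by a multiple of `θ` with respect to the quadratic module `Q`. -/
def IsSqBounded (Q : PointedCone ℝ A) (θ a : A) : Prop :=
  ∃ N : ℝ, 0 ≤ N ∧ N • θ - a ^ 2 ∈ Q

/-- `Q` is archimedean: every square is bounded by a real constant. -/
def IsArchimedeanCone (Q : PointedCone ℝ A) : Prop :=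
  ∀ a : A, IsSqBounded Q 1 a

variable {Q : PointedCone ℝ A} {θ : A}

theorem IsQuadraticModule.sq_mem (hQ : IsQuadraticModule Q) (a : A) : a ^ 2 ∈ Q := by
  simpa using hQ.sq_mul_mem a 1 hQ.one_mem

theorem IsSqBounded.add (hQ : IsQuadraticModule Q) {a b : A} (ha : IsSqBounded Q θ a)
    (hb : IsSqBounded Q θ b) : IsSqBounded Q θ (a + b) := by
  obtain ⟨N, hN, hNa⟩ := ha
  obtain ⟨N', hN', hNb⟩ := hb
  refine ⟨2 * (N + N'), by positivity, ?_⟩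
  convert Q.add_mem (Q.smul_mem zero_le_two (Q.add_mem hNa hNb)) (hQ.sq_mem (a - b)) using 1
  algebra

theorem IsSqBounded.mul_left (hQ : IsQuadraticModule Q) {p a : A} (hp : IsSqBounded Q 1 p)
    (ha : IsSqBounded Q θ a) : IsSqBounded Q θ (p * a) := by
  obtain ⟨N, hN, hNp⟩ := hp
  obtain ⟨N', hN', hNa⟩ := ha
  refine ⟨N * N', by positivity, ?_⟩
  convert Q.add_mem (Q.smul_mem hN hNa) (hQ.sq_mul_mem a _ hNp) using 1
  algebra

theorem IsSqBounded.exists_sub_smul_sq_mem {a : A} (ha : IsSqBounded Q θ a) (hθ : θ ∈ Q) {b : A}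
    {ε : ℝ} (hε : 0 < ε) (hb : b - ε • θ ∈ Q) : ∃ δ : ℝ, 0 < δ ∧ b - δ • a ^ 2 ∈ Q := by
  obtain ⟨N, hN, hNa⟩ := ha
  have hδ : 0 < ε / (N + 1) := by positivity
  refine ⟨ε / (N + 1), hδ, ?_⟩
  have hmul : ε = ε / (N + 1) * (N + 1) := by field_simp
  rw [hmul] at hb
  convert Q.add_mem hb (Q.smul_mem hδ.le (Q.add_mem hNa hθ)) using 1
  module

theorem isSqBounded_sum_sq_of_mem_span (hQ : IsQuadraticModule Q) (harch : IsArchimedeanCone Q)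
    {B : Finset A} {a : A} (ha : a ∈ Ideal.span (B : Set A)) :
    IsSqBounded Q (∑ b ∈ B, b ^ 2) a := by
  classical
  induction ha using Submodule.span_induction with
  | mem b hb =>
    refine ⟨1, zero_le_one, ?_⟩
    rw [one_smul, ← Finset.add_sum_erase _ _ hb, add_sub_cancel_left]
    exact Q.sum_mem fun b _ => hQ.sq_mem b
  | zero => exact ⟨0, le_rfl, by simp⟩
  | add a b _ _ ha hb => exact ha.add hQ hb
  | smul p a _ ha => exact (harch p).mul_left hQ ha

theorem smul_sq_sub_pow_mul_sq_mem (hQ : IsQuadraticModule Q) {R : ℝ} (hR : 0 ≤ R) {a : A}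
    (ha : R • 1 - a ^ 2 ∈ Q) (b : A) (m : ℕ) : R ^ m • b ^ 2 - (a ^ m * b) ^ 2 ∈ Q := by
  induction m with
  | zero => simp
  | succ m ih =>
    convert Q.add_mem (Q.smul_mem hR ih) (hQ.sq_mul_mem (a ^ m * b) _ ha) using 1
    algebra

variable {I : Ideal A}

theorem exists_forall_smul_sub_pow_mul_mem (hQ : IsQuadraticModule Q)
    (hθ : ∀ a ∈ I, IsSqBounded Q θ a) {R : ℝ} (hR : 0 ≤ R) {a : A} (ha : R • 1 - a ^ 2 ∈ Q) {g : A}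
    (hg : g ∈ I * I) : ∃ N : ℝ, ∀ m : ℕ, (N * R ^ m) • θ - a ^ (2 * m) * g ∈ Q := by
  refine Submodule.mul_induction_on hg (fun b hb c hc => ?_) fun g h hg hh => ?_
  · obtain ⟨N, -, hNb⟩ := hθ b hb
    obtain ⟨N', -, hNc⟩ := hθ c hc
    refine ⟨(N + N') / 2, fun m => ?_⟩
    have bound := Q.smul_mem (pow_nonneg hR m) (Q.add_mem hNb hNc)
    have geometric := Q.add_mem (smul_sq_sub_pow_mul_sq_mem hQ hR ha b m)
      (smul_sq_sub_pow_mul_sq_mem hQ hR ha c m)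
    -- polarization: `2 * (b * c) = b ^ 2 + c ^ 2 - (b - c) ^ 2`
    convert Q.smul_mem (by norm_num : (0 : ℝ) ≤ 1 / 2)
      (Q.add_mem (Q.add_mem bound geometric) (hQ.sq_mem (a ^ m * (b - c)))) using 1
    algebra
  · obtain ⟨N, hN⟩ := hg
    obtain ⟨N', hN'⟩ := hh
    refine ⟨N + N', fun m => ?_⟩
    convert Q.add_mem (hN m) (hN' m) using 1
    algebra

theorem exists_character_on_sq_ideal (hQ : IsQuadraticModule Q) (harch : IsArchimedeanCone Q)
    (hθ : ∀ a ∈ I, IsSqBounded Q θ a) (hθI : θ ∈ I * I) (hθQ : θ ∈ Q) {F : A} (hFI : F ∈ I * I)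
    (hF : ∀ ε : ℝ, 0 < ε → F - ε • θ ∉ Q) :
    ∃ (φ : A →ₗ[ℝ] ℝ) (χ : A →ₐ[ℝ] ℝ), (∀ g ∈ I * I, g ∈ Q → 0 ≤ φ g) ∧ φ θ = 1 ∧ φ F ≤ 0 ∧
      ∀ (a : A), ∀ g ∈ I * I, φ (a * g) = χ a * φ g := by
  let P : PointedCone ℝ ↥(I * I) := Q.comap ((I * I).subtype.restrictScalars ℝ)
  have growth : IsGrowthUnit A P ⟨θ, hθI⟩ := fun a => by
    obtain ⟨R, hR, ha⟩ := harch a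
    have ha' : (R + 1) • 1 - a ^ 2 ∈ Q := by
      convert Q.add_mem ha hQ.one_mem using 1
      algebra
    exact ⟨R + 1, by positivity, fun g =>
      exists_forall_smul_sub_pow_mul_mem hQ hθ (by positivity) ha' g.2⟩
  obtain ⟨φ₀, χ, hφP, hφθ, hφF, hφχ⟩ := growth.exists_character_of_forall_sub_smul_notMem hθQ
    (fun a g hg => hQ.sq_mul_mem a _ hg) (F := ⟨F, hFI⟩) hF
  obtain ⟨φ, hφ⟩ := LinearMap.exists_extend (p := (I * I).restrictScalars ℝ) φ₀
  have hφ₀ : ∀ g (hg : g ∈ I * I), φ g = φ₀ ⟨g, hg⟩ := fun g hg => by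
    rw [← hφ]
    rfl
  refine ⟨φ, χ, fun g hg hgQ => ?_, ?_, ?_, fun a g hg => ?_⟩
  · exact (hφP ⟨g, hg⟩ hgQ).trans_eq (hφ₀ g hg).symm
  · rw [hφ₀ θ hθI, hφθ]
  · exact (hφ₀ F hFI).trans_le hφF
  · rw [hφ₀ g hg, ← hφχ a ⟨g, hg⟩]
    exact hφ₀ _ (Ideal.mul_mem_left _ a hg)

end QuadraticModules

section PointIdeals

variable {σ k : Type*} [Field k]

/-- The maximal ideal of the polynomials vanishing at the point `u`. -/
noncomputable abbrev pointIdeal (u : σ → k) : Ideal (MvPolynomial σ k) := RingHom.ker (eval u)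

variable {u v : σ → k}

theorem X_sub_C_mem_pointIdeal (u : σ → k) (i : σ) : X i - C (u i) ∈ pointIdeal u := by
  simp [RingHom.mem_ker]

theorem sub_C_eval_mem_pointIdeal (u : σ → k) (p : MvPolynomial σ k) :
    p - C (eval u p) ∈ pointIdeal u := by
  simp [RingHom.mem_ker]

theorem pointIdeal_eq_span_X_sub_C (u : σ → k) :
    pointIdeal u = Ideal.span (Set.range fun i => X i - C (u i)) := by
  refine le_antisymm (fun p hp => ?_) ?_
  · have key : p - C (eval u p) ∈ Ideal.span (Set.range fun i => X i - C (u i)) := by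
      clear hp
      induction p using MvPolynomial.induction_on with
      | C r => simp
      | add p q hp hq =>
        convert Ideal.add_mem _ hp hq using 1
        simp only [map_add]
        ring
      | mul_X p i hp =>
        convert Ideal.add_mem _
          (Ideal.mul_mem_left _ p (Ideal.subset_span (Set.mem_range_self i)))
          (Ideal.mul_mem_left _ (C (u i)) hp) using 1
        simp only [map_mul, eval_X]
        ring
    simpa [(RingHom.mem_ker (f := eval u)).1 hp] using key
  · rw [Ideal.span_le]
    rintro _ ⟨i, rfl⟩
    exact X_sub_C_mem_pointIdeal u i

theorem isCoprime_pointIdeal (huv : u ≠ v) : IsCoprime (pointIdeal u) (pointIdeal v) := by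
  have maximal : ∀ w : σ → k, (pointIdeal w).IsMaximal := fun w =>
    RingHom.ker_isMaximal_of_surjective _ fun r => ⟨C r, eval_C r⟩
  have := maximal u
  have := maximal v
  refine Ideal.isCoprime_of_isMaximal fun heq => huv (funext fun i => ?_)
  have := heq ▸ X_sub_C_mem_pointIdeal u i
  simpa [RingHom.mem_ker, sub_eq_zero, eq_comm] using this

theorem exists_forall_sub_mem_pointIdeal_pow (S : Finset (σ → k)) (d : ℕ)
    (g : (σ → k) → MvPolynomial σ k) : ∃ r, ∀ u ∈ S, r - g u ∈ pointIdeal u ^ d := by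
  obtain ⟨r, hr⟩ := Ideal.exists_forall_sub_mem_ideal (I := fun u : S => pointIdeal u.1 ^ d)
    (fun u v huv => (isCoprime_pointIdeal (Subtype.coe_ne_coe.2 huv)).pow) fun u => g u
  exact ⟨r, fun u hu => hr ⟨u, hu⟩⟩

theorem exists_forall_eval_eq_ite [DecidableEq (σ → k)] (S : Finset (σ → k)) (v : σ → k) :
    ∃ e : MvPolynomial σ k, ∀ u ∈ S, eval u e = if u = v then 1 else 0 := by
  obtain ⟨e, he⟩ := exists_forall_sub_mem_pointIdeal_pow S 1 fun u => if u = v then 1 else 0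
  refine ⟨e, fun u hu => ?_⟩
  have := he u hu
  split_ifs at this ⊢ <;> simpa [RingHom.mem_ker, sub_eq_zero] using this

theorem mem_iInf_pointIdeal {S : Finset (σ → k)} {p : MvPolynomial σ k} :
    p ∈ ⨅ u ∈ S, pointIdeal u ↔ ∀ u ∈ S, eval u p = 0 := by
  simp [Submodule.mem_iInf, RingHom.mem_ker]

theorem mem_iInf_pointIdeal_pow {S : Finset (σ → k)} {d : ℕ} {p : MvPolynomial σ k} :
    p ∈ (⨅ u ∈ S, pointIdeal u) ^ d ↔ ∀ u ∈ S, p ∈ pointIdeal u ^ d := by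
  simp only [← Submodule.mem_iInf]
  rw [← Ideal.prod_eq_iInf_of_pairwise_isCoprime fun u _ v _ => isCoprime_pointIdeal,
    ← Ideal.prod_eq_iInf_of_pairwise_isCoprime fun u _ v _ huv => (isCoprime_pointIdeal huv).pow,
    Finset.prod_pow]

end PointIdeals

section DegenerateStates

variable {A ι : Type*} [CommRing A] [Algebra ℝ A] [Fintype ι] {l : ι → A} {φ : A →ₗ[ℝ] ℝ}

theorem apply_mul_eq_zero_of_apply_sum_sq_nonpos
    (hφ : ∀ a ∈ Ideal.span (Set.range l), 0 ≤ φ (a ^ 2)) (hl : φ (∑ i, l i ^ 2) ≤ 0) {a b : A}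
    (ha : a ∈ Ideal.span (Set.range l)) (hb : b ∈ Ideal.span (Set.range l)) : φ (a * b) = 0 := by
  have l_mem : ∀ i, l i ∈ Ideal.span (Set.range l) := fun i =>
    Ideal.subset_span (Set.mem_range_self i)
  have apply_sq : ∀ i, φ (l i ^ 2) = 0 := fun i => by
    rw [map_sum] at hl
    have := Finset.single_le_sum (fun j _ => hφ _ (l_mem j)) (Finset.mem_univ i)
    exact le_antisymm (this.trans hl) (hφ _ (l_mem i))
  induction ha using Submodule.span_induction generalizing b with
  | mem a ha =>
    obtain ⟨i, rfl⟩ := ha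
    have cauchy_schwarz := sq_apply_mul_le
      (W := (Ideal.span (Set.range l)).restrictScalars ℝ) hφ (l_mem i) hb
    rw [apply_sq, zero_mul] at cauchy_schwarz
    exact pow_eq_zero_iff two_ne_zero |>.1 (le_antisymm cauchy_schwarz (sq_nonneg _))
  | zero => simp
  | add a a' _ _ ha ha' => rw [add_mul, map_add, ha hb, ha' hb, add_zero]
  | smul c a _ ha =>
    rw [smul_eq_mul, mul_comm c, mul_assoc]
    exact ha (Ideal.mul_mem_left _ c hb)

/-- Multiplication by `e` localizes `φ` at the character `χ`: the functional `a ↦ φ (e ^ 2 * a)`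
agrees with `φ` on `I * I` and is defined on the squares of the larger ideal `J`. -/
theorem apply_eq_zero_of_apply_nonpos_of_character {I J : Ideal A} (hIJ : I ≤ J) {χ : A →ₐ[ℝ] ℝ}
    (hχJ : ∀ a ∈ J, χ a = 0) {e : A} (hχe : χ e = 1) (heJ : ∀ a ∈ J, e * a ∈ I)
    (hφ : ∀ a ∈ I, 0 ≤ φ (a ^ 2)) (hφχ : ∀ a, ∀ g ∈ I * I, φ (a * g) = χ a * φ g)
    (hl : Ideal.span (Set.range l) = J) {F : A} (hF : F - ∑ i, l i ^ 2 ∈ J ^ 3)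
    (hFI : F ∈ I * I) (hφF : φ F ≤ 0) {g : A} (hg : g ∈ I * I) : φ g = 0 := by
  let ψ : A →ₗ[ℝ] ℝ := φ ∘ₗ LinearMap.mulLeft ℝ (e ^ 2)
  have hψ : ∀ a, ψ a = φ (e ^ 2 * a) := fun _ => rfl
  have localized_mem : ∀ g ∈ J * J, e ^ 2 * g ∈ I * I := fun g hg => by
    refine Submodule.mul_induction_on hg (fun a ha b hb => ?_) fun a b ha hb => ?_
    · convert Ideal.mul_mem_mul (heJ a ha) (heJ b hb) using 1
      ring
    · rw [mul_add]
      exact Ideal.add_mem _ ha hb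
  have localized_eq : ∀ g ∈ I * I, ψ g = φ g := fun g hg => by
    rw [hψ, hφχ _ g hg, map_pow, hχe, one_pow, one_mul]
  have cube : ∀ g ∈ J ^ 3, ψ g = 0 := fun g hg => by
    rw [pow_succ', sq] at hg
    refine Submodule.mul_induction_on hg (fun a ha b hb => ?_) fun a b ha hb => ?_
    · rw [hψ, mul_left_comm, hφχ a _ (localized_mem b hb), hχJ a ha, zero_mul]
    · rw [map_add, ha, hb, add_zero]
  have sum_sq : ψ (∑ i, l i ^ 2) ≤ 0 := by
    have := cube _ hF
    rw [map_sub, sub_eq_zero, localized_eq F hFI] at this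
    exact this ▸ hφF
  subst hl
  rw [← localized_eq g hg]
  refine Submodule.mul_induction_on hg (fun a ha b hb => ?_) fun a b ha hb => ?_
  · refine apply_mul_eq_zero_of_apply_sum_sq_nonpos (fun a ha => ?_) sum_sq (hIJ ha) (hIJ hb)
    rw [hψ, ← mul_pow]
    exact hφ _ (heJ a ha)
  · rw [map_add, ha, hb, add_zero]

end DegenerateStates

section Certificates

variable {σ : Type*} [Fintype σ]

/-- `F` vanishes to second order at `u` with positive definite Hessian, expressed algebraically: up
to third order, `F` is the sum of the squares of a system of generators of the ideal of `u` that
has as many elements as there are variables. -/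
def IsNondegenerateZero (F : MvPolynomial σ ℝ) (u : σ → ℝ) : Prop :=
  ∃ l : σ → MvPolynomial σ ℝ,
    Ideal.span (Set.range l) = pointIdeal u ∧ F - ∑ i, l i ^ 2 ∈ pointIdeal u ^ 3

variable {F G : MvPolynomial σ ℝ} {u : σ → ℝ}

theorem IsNondegenerateZero.mem_sq (hF : IsNondegenerateZero F u) : F ∈ pointIdeal u ^ 2 := by
  obtain ⟨l, hl, hF⟩ := hF
  rw [← sub_add_cancel F (∑ i, l i ^ 2)]
  refine Ideal.add_mem _ (Ideal.pow_le_pow_right (by norm_num) hF) (Ideal.sum_mem _ fun i _ => ?_)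
  exact Ideal.pow_mem_pow (hl ▸ Ideal.subset_span (Set.mem_range_self i)) 2

theorem IsNondegenerateZero.of_sub_mem (hF : IsNondegenerateZero F u)
    (hG : G - F ∈ pointIdeal u ^ 3) : IsNondegenerateZero G u := by
  obtain ⟨l, hl, hF⟩ := hF
  refine ⟨l, hl, ?_⟩
  rw [← sub_add_sub_cancel G F]
  exact Ideal.add_mem _ hG hF

variable {Q : PointedCone ℝ (MvPolynomial σ ℝ)} {S : Finset (σ → ℝ)}

theorem apply_eq_zero_of_nondegenerateZero (hF : ∀ u ∈ S, IsNondegenerateZero F u) {x : σ → ℝ}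
    (hx : x ∈ S) {φ : MvPolynomial σ ℝ →ₗ[ℝ] ℝ} (hφ : ∀ a ∈ ⨅ u ∈ S, pointIdeal u, 0 ≤ φ (a ^ 2))
    (hφx : ∀ a, ∀ g ∈ (⨅ u ∈ S, pointIdeal u) * ⨅ u ∈ S, pointIdeal u,
      φ (a * g) = aeval x a * φ g) (hφF : φ F ≤ 0) {g : MvPolynomial σ ℝ}
    (hg : g ∈ (⨅ u ∈ S, pointIdeal u) * ⨅ u ∈ S, pointIdeal u) : φ g = 0 := by
  classical
  obtain ⟨e, eval_e⟩ := exists_forall_eval_eq_ite S x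
  obtain ⟨l, hl, hFl⟩ := hF x hx
  refine apply_eq_zero_of_apply_nonpos_of_character (iInf₂_le x hx)
    (χ := aeval x) (fun a ha => by simpa [aeval_eq_eval] using ha) (e := e) ?_ (fun a ha => ?_)
    hφ hφx hl hFl ?_ hφF hg
  · simpa [aeval_eq_eval] using eval_e x hx
  · refine mem_iInf_pointIdeal.2 fun v hv => ?_
    rw [map_mul, eval_e v hv]
    split_ifs with hvx
    · rw [hvx, one_mul, RingHom.mem_ker.1 ha]
    · rw [zero_mul]
  · exact sq (⨅ u ∈ S, pointIdeal u) ▸ mem_iInf_pointIdeal_pow.2 fun u hu => (hF u hu).mem_sq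

theorem IsQuadraticModule.exists_sub_smul_sq_mem (hQ : IsQuadraticModule Q)
    (harch : IsArchimedeanCone Q) (hF : ∀ u ∈ S, IsNondegenerateZero F u)
    (hpos : ∀ x ∉ S, (∀ q ∈ Q, 0 ≤ eval x q) → 0 < eval x F) {p : MvPolynomial σ ℝ}
    (hp : ∀ u ∈ S, eval u p = 0) : ∃ ε : ℝ, 0 < ε ∧ F - ε • p ^ 2 ∈ Q := by
  set I : Ideal (MvPolynomial σ ℝ) := ⨅ u ∈ S, pointIdeal u
  obtain ⟨B, hB⟩ := IsNoetherian.noetherian I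
  have hBI : ∀ b ∈ B, b ∈ I := fun b hb => hB ▸ Submodule.subset_span hb
  set θ := ∑ b ∈ B, b ^ 2
  have hθ : ∀ a ∈ I, IsSqBounded Q θ a := fun a ha =>
    isSqBounded_sum_sq_of_mem_span hQ harch (by rwa [Ideal.span, hB])
  have hθI : θ ∈ I * I := Ideal.sum_mem _ fun b hb =>
    sq b ▸ Ideal.mul_mem_mul (hBI b hb) (hBI b hb)
  have hθQ : θ ∈ Q := Q.sum_mem fun b _ => hQ.sq_mem b
  have hFI : F ∈ I * I := sq I ▸ mem_iInf_pointIdeal_pow.2 fun u hu => (hF u hu).mem_sq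
  by_contra! hcon
  have notMem : ∀ ε : ℝ, 0 < ε → F - ε • θ ∉ Q := fun ε hε hmem => by
    obtain ⟨δ, hδ, hp⟩ := (hθ p (mem_iInf_pointIdeal.2 hp)).exists_sub_smul_sq_mem hθQ hε hmem
    exact hcon δ hδ hp
  obtain ⟨φ, χ, hφQ, hφθ, hφF, hφχ⟩ := exists_character_on_sq_ideal hQ harch hθ hθI hθQ hFI notMem
  obtain ⟨x, rfl⟩ : ∃ x, χ = aeval x := ⟨_, aeval_unique χ⟩
  by_cases hx : x ∈ S
  · refine one_ne_zero (hφθ.symm.trans (apply_eq_zero_of_nondegenerateZero hF hx (fun a ha => ?_)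
      hφχ hφF hθI))
    exact hφQ _ (sq a ▸ Ideal.mul_mem_mul ha ha) (hQ.sq_mem a)
  · have eval_eq : ∀ a, eval x a = φ (a * θ) := fun a => by
      rw [hφχ a θ hθI, hφθ, mul_one, aeval_eq_eval]
    have nonneg : ∀ q ∈ Q, 0 ≤ eval x q := fun q hq => by
      rw [eval_eq]
      refine hφQ _ (Ideal.mul_mem_left _ _ hθI) ?_
      rw [Finset.mul_sum]
      exact Q.sum_mem fun b _ => mul_comm q (b ^ 2) ▸ hQ.sq_mul_mem b q hq
    have evalF : eval x F = eval x θ * φ F := by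
      rw [eval_eq F, mul_comm, hφχ θ F hFI, aeval_eq_eval]
    have := hpos x hx nonneg
    nlinarith [nonneg θ hθQ]

theorem isArchimedeanCone_of_sub_sum_sq_mem (hQ : IsQuadraticModule Q) {R : ℝ}
    (hR : C R - ∑ i, X i ^ 2 ∈ Q) : IsArchimedeanCone Q := by
  classical
  intro p
  induction p using MvPolynomial.induction_on with
  | C r => exact ⟨r ^ 2, sq_nonneg r, by simp [smul_eq_C_mul]⟩
  | add p q hp hq => exact hp.add hQ hq
  | mul_X p i hp =>
    refine hp.mul_left hQ ⟨|R|, abs_nonneg R, ?_⟩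
    have hR' : |R| • (1 : MvPolynomial σ ℝ) - ∑ j, X j ^ 2 ∈ Q := by
      convert Q.add_mem hR (Q.smul_mem (sub_nonneg.2 (le_abs_self R)) hQ.one_mem) using 1
      rw [← algebraMap_eq, Algebra.algebraMap_eq_smul_one]
      module
    convert Q.add_mem hR' (Q.sum_mem fun j (_ : j ∈ Finset.univ.erase i) => hQ.sq_mem (X j)) using 1
    rw [← Finset.add_sum_erase _ _ (Finset.mem_univ i)]
    ring

end Certificates

section LocalPositivity

open Asymptotics Topology

variable {σ : Type*} {u : σ → ℝ}

theorem isBigO_sqrt_sum_sq_of_mem_span {ι : Type*} [Fintype ι] {l : ι → MvPolynomial σ ℝ}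
    {p : MvPolynomial σ ℝ} (hp : p ∈ Ideal.span (Set.range l)) :
    (fun x => eval x p) =O[𝓝 u] fun x => √(∑ i, eval x (l i) ^ 2) := by
  induction hp using Submodule.span_induction with
  | mem p hp =>
    obtain ⟨i, rfl⟩ := hp
    refine IsBigO.of_bound' (.of_forall fun x => ?_)
    rw [Real.norm_eq_abs, Real.norm_of_nonneg (Real.sqrt_nonneg _)]
    exact Real.abs_le_sqrt (Finset.single_le_sum (fun j _ => sq_nonneg (eval x (l j)))
      (Finset.mem_univ i))
  | zero => simpa only [map_zero] using isBigO_zero _ _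
  | add p q _ _ hp hq => simpa only [map_add] using hp.add hq
  | smul a p _ hp =>
    have ha : (fun x => eval x a) =O[𝓝 u] fun _ => (1 : ℝ) :=
      (MvPolynomial.continuous_eval a).continuousAt.isBigO_one ℝ
    simpa only [smul_eq_mul, map_mul, one_mul] using ha.mul hp

theorem isLittleO_sum_sq_of_mem_pointIdeal_cube {ι : Type*} [Fintype ι] {l : ι → MvPolynomial σ ℝ}
    (hl : Ideal.span (Set.range l) = pointIdeal u) {p : MvPolynomial σ ℝ}
    (hp : p ∈ pointIdeal u ^ 3) :
    (fun x => eval x p) =o[𝓝 u] fun x => ∑ i, eval x (l i) ^ 2 := by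
  have bound : ∀ p ∈ pointIdeal u, (fun x => eval x p) =O[𝓝 u] fun x => √(∑ i, eval x (l i) ^ 2) :=
    fun p hp => isBigO_sqrt_sum_sq_of_mem_span (hl ▸ hp)
  have vanish : ∀ p ∈ pointIdeal u, (fun x => eval x p) =o[𝓝 u] fun _ => (1 : ℝ) := fun p hp =>
    (isLittleO_one_iff ℝ).2 (by
      simpa only [RingHom.mem_ker.1 hp] using (MvPolynomial.continuous_eval p).tendsto u)
  have square : ∀ p ∈ pointIdeal u * pointIdeal u,
      (fun x => eval x p) =O[𝓝 u] fun x => ∑ i, eval x (l i) ^ 2 := fun p hp => by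
    refine Submodule.mul_induction_on hp (fun a ha b hb => ?_) fun a b ha hb => ?_
    · refine ((bound a ha).mul (bound b hb)).congr (fun x => (map_mul _ a b).symm) fun x => ?_
      exact Real.mul_self_sqrt (by positivity)
    · simpa only [map_add] using ha.add hb
  rw [pow_succ', sq] at hp
  refine Submodule.mul_induction_on hp (fun a ha b hb => ?_) fun a b ha hb => ?_
  · simpa only [map_mul, one_mul] using (vanish a ha).mul_isBigO (square b hb)
  · simpa only [map_add] using ha.add hb

theorem IsNondegenerateZero.eventually_pos [Fintype σ] {F : MvPolynomial σ ℝ}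
    (hF : IsNondegenerateZero F u) :
    ∀ᶠ x in 𝓝 u, x ≠ u → 0 < eval x F := by
  obtain ⟨l, hl, hFl⟩ := hF
  have sum_sq_pos : ∀ x, x ≠ u → 0 < ∑ i, eval x (l i) ^ 2 := fun x hx => by
    by_contra! hle
    have zero := (Finset.sum_eq_zero_iff_of_nonneg fun i _ => sq_nonneg (eval x (l i))).1
      (hle.antisymm (by positivity))
    have le : pointIdeal u ≤ pointIdeal x := by
      rw [← hl, Ideal.span_le]
      rintro _ ⟨i, rfl⟩
      exact pow_eq_zero_iff two_ne_zero |>.1 (zero i (Finset.mem_univ i))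
    refine hx (funext fun i => ?_)
    simpa [RingHom.mem_ker, sub_eq_zero] using le (X_sub_C_mem_pointIdeal u i)
  filter_upwards [(isLittleO_sum_sq_of_mem_pointIdeal_cube hl hFl).bound one_half_pos]
    with x hbound hx
  have hpos := sum_sq_pos x hx
  simp only [map_sub, map_sum, map_pow, Real.norm_eq_abs, abs_of_pos hpos] at hbound
  linarith [(abs_le.1 hbound).1]

end LocalPositivity

section Hessian

variable {σ : Type*}

/-- The derivation `∑ i, v i • ∂ᵢ` of the polynomial ring. -/
noncomputable def dirDeriv (v : σ → ℝ) :
    Derivation ℝ (MvPolynomial σ ℝ) (MvPolynomial σ ℝ) :=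
  mkDerivation ℝ fun i => C (v i)

variable {u : σ → ℝ}

theorem dirDeriv_X (v : σ → ℝ) (i : σ) : dirDeriv v (X i) = C (v i) :=
  mkDerivation_X ℝ _ i

theorem eval_dirDeriv_mul {c : MvPolynomial σ ℝ} (hc : eval u c = 0) (q : MvPolynomial σ ℝ)
    (v : σ → ℝ) : eval u (dirDeriv v (c * q)) = eval u q * eval u (dirDeriv v c) := by
  simp [Derivation.leibniz, hc]

theorem eval_dirDeriv_dirDeriv_mul {c : MvPolynomial σ ℝ} (hc : eval u c = 0)
    (q : MvPolynomial σ ℝ) (v : σ → ℝ) :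
    eval u (dirDeriv v (dirDeriv v (c * q))) = eval u q * eval u (dirDeriv v (dirDeriv v c))
      + 2 * (eval u (dirDeriv v c) * eval u (dirDeriv v q)) := by
  simp only [Derivation.leibniz, smul_eq_mul, map_add, map_mul, hc]
  ring

theorem eval_dirDeriv_dirDeriv_mul_X_sub_C_mul (v : σ → ℝ) (r : MvPolynomial σ ℝ) (i j : σ) :
    eval u (dirDeriv v (dirDeriv v (r * ((X i - C (u i)) * (X j - C (u j)))))) =
      2 * (v i * eval u r * v j) := by
  simp only [Derivation.leibniz, dirDeriv_X, derivation_C, smul_eq_mul, map_add, map_mul, map_sub,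
    map_zero, eval_X, eval_C, sub_self]
  ring

variable [Fintype σ]

theorem dirDeriv_eq_sum_pderiv (v : σ → ℝ) (p : MvPolynomial σ ℝ) :
    dirDeriv v p = ∑ i, C (v i) * pderiv i p := by
  classical
  have apply_sum : ∀ p, (∑ i, (C (v i) : MvPolynomial σ ℝ) • pderiv i) p =
      ∑ i, C (v i) * pderiv i p := fun p =>
    (congrFun (map_sum Derivation.coeFnAddMonoidHom
      (fun i => (C (v i) : MvPolynomial σ ℝ) • pderiv (R := ℝ) i) _) p).trans
      (Finset.sum_apply _ _ _)
  have : dirDeriv v = ∑ i, (C (v i) : MvPolynomial σ ℝ) • pderiv i := derivation_ext fun i => by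
    simp [apply_sum, dirDeriv_X, pderiv_X, Pi.single_apply]
  rw [this, apply_sum]

theorem exists_eq_sum_mul_X_sub_C {F : MvPolynomial σ ℝ} (hF : eval u F = 0) :
    ∃ q : σ → MvPolynomial σ ℝ, F = ∑ i, q i * (X i - C (u i)) := by
  have : F ∈ Ideal.span (Set.range fun i => X i - C (u i)) := by
    rw [← pointIdeal_eq_span_X_sub_C]
    exact hF
  obtain ⟨q, hq⟩ := Ideal.mem_span_range_iff_exists_fun.1 this
  exact ⟨q, hq.symm⟩

theorem exists_symm_eq_sum_sum_mul_X_sub_C {F : MvPolynomial σ ℝ} (hF : eval u F = 0)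
    (hgrad : ∀ v, eval u (dirDeriv v F) = 0) :
    ∃ r : σ → σ → MvPolynomial σ ℝ, (∀ i j, r i j = r j i) ∧
      F = ∑ i, ∑ j, r i j * ((X i - C (u i)) * (X j - C (u j))) := by
  classical
  obtain ⟨q, rfl⟩ := exists_eq_sum_mul_X_sub_C hF
  have hq : ∀ i, eval u (q i) = 0 := fun i => by
    simpa [Derivation.leibniz, dirDeriv_X, derivation_C, Pi.single_apply, apply_ite C,
      apply_ite (eval u)] using hgrad (Pi.single i 1)
  choose r hr using fun i => exists_eq_sum_mul_X_sub_C (hq i)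
  have expand : ∑ i, q i * (X i - C (u i)) =
      ∑ i, ∑ j, r i j * ((X i - C (u i)) * (X j - C (u j))) := by
    refine Finset.sum_congr rfl fun i _ => ?_
    conv_lhs => rw [hr i, Finset.sum_mul]
    exact Finset.sum_congr rfl fun j _ => by ring
  have expand_swap : ∑ i, q i * (X i - C (u i)) =
      ∑ i, ∑ j, r j i * ((X i - C (u i)) * (X j - C (u j))) := by
    rw [expand, Finset.sum_comm]
    exact Finset.sum_congr rfl fun i _ => Finset.sum_congr rfl fun j _ => by ring
  refine ⟨fun i j => C (1 / 2) * (r i j + r j i), fun i j => congrArg _ (add_comm _ _), ?_⟩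
  have half : (C (1 / 2) : MvPolynomial σ ℝ) * 2 = 1 := by
    rw [← map_ofNat C 2, ← C_mul, one_div_mul_cancel two_ne_zero, C_1]
  simp only [mul_assoc, add_mul, ← Finset.mul_sum, Finset.sum_add_distrib, ← expand,
    ← expand_swap]
  rw [← two_mul, ← mul_assoc, half, one_mul]

theorem span_range_mulVec_le {A ι : Type*} [CommRing A] [Fintype ι] (B : Matrix ι ι A)
    (d : ι → A) : Ideal.span (Set.range (B.mulVec d)) ≤ Ideal.span (Set.range d) := by
  rw [Ideal.span_le]
  rintro _ ⟨i, rfl⟩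
  exact Ideal.sum_mem _ fun j _ => Ideal.mul_mem_left _ _ (Ideal.subset_span ⟨j, rfl⟩)

theorem span_range_mulVec_of_isUnit {A ι : Type*} [CommRing A] [Fintype ι] [DecidableEq ι]
    {B : Matrix ι ι A} (hB : IsUnit B) (d : ι → A) :
    Ideal.span (Set.range (B.mulVec d)) = Ideal.span (Set.range d) := by
  refine (span_range_mulVec_le B d).antisymm ?_
  obtain ⟨B', hB'⟩ := hB.exists_left_inv
  simpa only [Matrix.mulVec_mulVec, hB', Matrix.one_mulVec]
    using span_range_mulVec_le B' (B.mulVec d)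

open scoped MatrixOrder in
theorem isNondegenerateZero_of_sub_quadratic_mem {F : MvPolynomial σ ℝ} {H : Matrix σ σ ℝ}
    (hH : H.PosDef)
    (hF : F - ∑ i, ∑ j, C (H i j) * ((X i - C (u i)) * (X j - C (u j))) ∈ pointIdeal u ^ 3) :
    IsNondegenerateZero F u := by
  classical
  obtain ⟨B, hB⟩ := CStarAlgebra.nonneg_iff_eq_star_mul_self.mp hH.posSemidef.nonneg
  have B_isUnit : IsUnit B := by
    have := hH.isUnit
    rw [hB] at this
    exact isUnit_of_mul_isUnit_right this
  set d : σ → MvPolynomial σ ℝ := fun i => X i - C (u i)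
  refine ⟨(B.map C).mulVec d, ?_, ?_⟩
  · rw [pointIdeal_eq_span_X_sub_C]
    exact span_range_mulVec_of_isUnit (B_isUnit.map (C : ℝ →+* MvPolynomial σ ℝ).mapMatrix) d
  · convert hF using 2
    calc ∑ k, (B.map C).mulVec d k ^ 2
        = (B.map C).mulVec d ⬝ᵥ (B.map C).mulVec d := by simp only [dotProduct, sq]
      _ = d ⬝ᵥ (H.map C).mulVec d := by
        rw [hB, Matrix.star_eq_conjTranspose, Matrix.conjTranspose_eq_transpose_of_trivial,
          Matrix.map_mul, ← Matrix.mulVec_mulVec, Matrix.dotProduct_mulVec d, Matrix.transpose_map,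
          Matrix.vecMul_transpose]
      _ = ∑ i, ∑ j, C (H i j) * (d i * d j) := by
        simp only [dotProduct, Matrix.mulVec, Matrix.map_apply, Finset.mul_sum]
        exact Finset.sum_congr rfl fun i _ => Finset.sum_congr rfl fun j _ => by ring

theorem isNondegenerateZero_of_hessian_pos {F : MvPolynomial σ ℝ} (hF : eval u F = 0)
    (hgrad : ∀ v, eval u (dirDeriv v F) = 0)
    (hhess : ∀ v, v ≠ 0 → 0 < eval u (dirDeriv v (dirDeriv v F))) :
    IsNondegenerateZero F u := by
  obtain ⟨r, hr, rfl⟩ := exists_symm_eq_sum_sum_mul_X_sub_C hF hgrad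
  have posDef : (Matrix.of fun i j => eval u (r i j)).PosDef := by
    refine .of_dotProduct_mulVec_pos (Matrix.ext fun i j => by simp [hr i j]) fun v hv => ?_
    have := hhess v hv
    simp only [map_sum, eval_dirDeriv_dirDeriv_mul_X_sub_C_mul, ← Finset.mul_sum] at this
    simpa only [dotProduct, Matrix.mulVec, Matrix.of_apply, star_trivial, Finset.mul_sum,
      mul_assoc] using pos_of_mul_pos_right this zero_le_two
  refine isNondegenerateZero_of_sub_quadratic_mem posDef ?_
  simp only [← Finset.sum_sub_distrib, ← sub_mul, Matrix.of_apply, pow_succ' _ 2]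
  refine Ideal.sum_mem _ fun i _ => Ideal.sum_mem _ fun j _ =>
    Ideal.mul_mem_mul (sub_C_eval_mem_pointIdeal u (r i j)) ?_
  rw [sq]
  exact Ideal.mul_mem_mul (X_sub_C_mem_pointIdeal u i) (X_sub_C_mem_pointIdeal u j)

end Hessian

section LocalCertificates

theorem exists_forall_pos_add_mul_of_quadratic {V : Type*} [NormedAddCommGroup V]
    [NormedSpace ℝ V] [ProperSpace V] {q r : V → ℝ} (hq : Continuous q) (hr : Continuous r)
    (hq_smul : ∀ (a : ℝ) v, q (a • v) = a ^ 2 * q v)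
    (hr_smul : ∀ (a : ℝ) v, r (a • v) = a ^ 2 * r v) (hr_nonneg : ∀ v, 0 ≤ r v)
    (hqr : ∀ v, v ≠ 0 → r v = 0 → 0 < q v) :
    ∃ a : ℝ, ∀ v, v ≠ 0 → 0 < q v + a * r v := by
  have cover : Metric.sphere (0 : V) 1 ⊆ ⋃ m : ℕ, {v | 0 < q v + m * r v} := fun v hv => by
    have hv0 : v ≠ 0 := ne_zero_of_mem_unit_sphere ⟨v, hv⟩
    rw [Set.mem_iUnion]
    rcases (hr_nonneg v).eq_or_lt with hrv | hrv
    · exact ⟨0, by simpa using hqr v hv0 hrv.symm⟩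
    · obtain ⟨m, hm⟩ := exists_nat_gt (-q v / r v)
      rw [div_lt_iff₀ hrv] at hm
      exact ⟨m, show 0 < q v + m * r v by linarith⟩
  have directed : Directed (· ⊆ ·) fun m : ℕ => {v | 0 < q v + m * r v} :=
    directed_of_isDirected_le fun m m' hm v hv => lt_of_lt_of_le hv <|
      add_le_add_right (mul_le_mul_of_nonneg_right (Nat.cast_le.2 hm) (hr_nonneg v)) _
  obtain ⟨m, hm⟩ := (isCompact_sphere (0 : V) 1).elim_directed_cover _
    (fun m => isOpen_lt continuous_const (hq.add (continuous_const.mul hr))) cover directed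
  refine ⟨m, fun v hv => ?_⟩
  have unit : 0 < q (‖v‖⁻¹ • v) + m * r (‖v‖⁻¹ • v) :=
    hm (by simp [norm_smul, norm_ne_zero_iff.2 hv])
  rw [hq_smul, hr_smul] at unit
  refine pos_of_mul_pos_right (a := ‖v‖⁻¹ ^ 2) (unit.trans_eq (by ring)) (by positivity)

variable {σ : Type*} {u : σ → ℝ}

theorem dirDeriv_smul (a : ℝ) (v : σ → ℝ) : dirDeriv (a • v) = a • dirDeriv v :=
  derivation_ext fun i => by simp [dirDeriv_X, C_mul']

theorem exists_multiplier_of_active {c : MvPolynomial σ ℝ} (hc : eval u c = 0) (μ a : ℝ) :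
    ∃ φ : MvPolynomial σ ℝ, ∀ v, eval u (dirDeriv v (c * φ)) = μ * eval u (dirDeriv v c) ∧
      eval u (dirDeriv v (dirDeriv v (c * φ))) =
        μ * eval u (dirDeriv v (dirDeriv v c)) - a * eval u (dirDeriv v c) ^ 2 := by
  refine ⟨C μ - C (a / 2) * c, fun v => ?_⟩
  rw [eval_dirDeriv_mul hc, eval_dirDeriv_dirDeriv_mul hc]
  constructor
  · simp [hc]
  · simp [hc, derivation_C, Derivation.leibniz]
    ring

theorem exists_sq_multiplier_of_active {c : MvPolynomial σ ℝ} (hc : eval u c = 0) {μ : ℝ}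
    (hμ : 0 < μ) (a : ℝ) :
    ∃ s : MvPolynomial σ ℝ, ∀ v, eval u (dirDeriv v (c * s ^ 2)) = μ * eval u (dirDeriv v c) ∧
      eval u (dirDeriv v (dirDeriv v (c * s ^ 2))) =
        μ * eval u (dirDeriv v (dirDeriv v c)) - a * eval u (dirDeriv v c) ^ 2 := by
  have sqrt_ne : √μ ≠ 0 := (Real.sqrt_pos.2 hμ).ne'
  refine ⟨C √μ - C (a / (4 * √μ)) * c, fun v => ?_⟩
  rw [eval_dirDeriv_mul hc, eval_dirDeriv_dirDeriv_mul hc]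
  constructor
  · simp [hc, Real.sq_sqrt hμ.le]
  · simp [hc, derivation_C, Derivation.leibniz, Derivation.leibniz_pow, Real.sq_sqrt hμ.le]
    field_simp
    ring

variable {ι : Type*} {E I : Finset ι} {c : ι → MvPolynomial σ ℝ} {f : MvPolynomial σ ℝ}

/-- The part `f - γ - ∑_{j ∈ I} c_j s_j² - ∑_{j ∈ E} c_j φ_j` of `f - γ` that is left over by the
multipliers `s_j²` of the constraints `c_j ≥ 0` and `φ_j` of the constraints `c_j = 0`. -/
noncomputable def multiplierResidual (E I : Finset ι) (c s φ : ι → MvPolynomial σ ℝ)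
    (f : MvPolynomial σ ℝ) (γ : ℝ) : MvPolynomial σ ℝ :=
  f - C γ - ∑ j ∈ I, c j * s j ^ 2 - ∑ j ∈ E, c j * φ j

theorem eval_multiplierResidual {x : σ → ℝ} (hx : ∀ j ∈ E, eval x (c j) = 0)
    (s φ : ι → MvPolynomial σ ℝ) (f : MvPolynomial σ ℝ) (γ : ℝ) :
    eval x (multiplierResidual E I c s φ f γ) =
      eval x f - γ - ∑ j ∈ I, eval x (c j) * eval x (s j) ^ 2 := by
  have hE : ∑ j ∈ E, eval x (c j) * eval x (φ j) = 0 :=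
    Finset.sum_eq_zero fun j hj => by rw [hx j hj, zero_mul]
  simp only [multiplierResidual, map_sub, map_sum, map_mul, map_pow, eval_C, hE, sub_zero]

/-- The Lagrangian `f - ∑_{j ∈ E} lamE_j c_j - ∑_{j ∈ I} lamI_j c_j`. -/
noncomputable def lagrangian (E I : Finset ι) (c : ι → MvPolynomial σ ℝ) (lamE lamI : ι → ℝ)
    (f : MvPolynomial σ ℝ) : MvPolynomial σ ℝ :=
  f - ∑ j ∈ E, C (lamE j) * c j - ∑ j ∈ I, C (lamI j) * c j

/-- The first order optimality conditions at `u` with strict complementarity and the second order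
sufficient condition, for minimizing `f` subject to `c_j = 0` (`j ∈ E`) and `c_j ≥ 0` (`j ∈ I`). -/
def StrictKKTAt (E I : Finset ι) (c : ι → MvPolynomial σ ℝ) (f : MvPolynomial σ ℝ)
    (u : σ → ℝ) : Prop :=
  ∃ lamE lamI : ι → ℝ,
    (∀ v, eval u (dirDeriv v (lagrangian E I c lamE lamI f)) = 0) ∧
    (∀ j ∈ I, 0 ≤ lamI j ∧ lamI j * eval u (c j) = 0) ∧
    (∀ j ∈ I, 0 < lamI j + eval u (c j)) ∧
    ∀ v, v ≠ 0 → (∀ j ∈ E, eval u (dirDeriv v (c j)) = 0) →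
      (∀ j ∈ I, eval u (c j) = 0 → eval u (dirDeriv v (c j)) = 0) →
      0 < eval u (dirDeriv v (dirDeriv v (lagrangian E I c lamE lamI f)))

theorem eval_dirDeriv_lagrangian (lamE lamI : ι → ℝ) (v : σ → ℝ) :
    eval u (dirDeriv v (lagrangian E I c lamE lamI f)) =
      eval u (dirDeriv v f) - ∑ j ∈ E, lamE j * eval u (dirDeriv v (c j))
        - ∑ j ∈ I, lamI j * eval u (dirDeriv v (c j)) := by
  simp [lagrangian, Derivation.leibniz, derivation_C]

theorem eval_dirDeriv_dirDeriv_lagrangian (lamE lamI : ι → ℝ) (v : σ → ℝ) :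
    eval u (dirDeriv v (dirDeriv v (lagrangian E I c lamE lamI f))) =
      eval u (dirDeriv v (dirDeriv v f))
        - ∑ j ∈ E, lamE j * eval u (dirDeriv v (dirDeriv v (c j)))
        - ∑ j ∈ I, lamI j * eval u (dirDeriv v (dirDeriv v (c j))) := by
  simp [lagrangian, Derivation.leibniz, derivation_C]

theorem exists_sq_multiplier_of_strict_complementarity {p : MvPolynomial σ ℝ} {μ : ℝ}
    (hμ : μ * eval u p = 0) (hstrict : 0 < μ + eval u p) (a : ℝ) :
    ∃ s : MvPolynomial σ ℝ, (eval u p ≠ 0 → s = 0) ∧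
      ∀ v, eval u (dirDeriv v (p * s ^ 2)) = μ * eval u (dirDeriv v p) ∧
        eval u (dirDeriv v (dirDeriv v (p * s ^ 2))) = μ * eval u (dirDeriv v (dirDeriv v p))
          - a * if eval u p = 0 then eval u (dirDeriv v p) ^ 2 else 0 := by
  by_cases hp : eval u p = 0
  · rw [hp, add_zero] at hstrict
    obtain ⟨s, hs⟩ := exists_sq_multiplier_of_active hp hstrict a
    exact ⟨s, fun h => absurd hp h, by simpa only [hp, if_true] using hs⟩
  · obtain rfl : μ = 0 := (mul_eq_zero.1 hμ).resolve_right hp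
    exact ⟨0, fun _ => rfl, fun v => by simp [hp]⟩

theorem eval_dirDeriv [Fintype σ] (v : σ → ℝ) (p : MvPolynomial σ ℝ) :
    eval u (dirDeriv v p) = ∑ i, v i * eval u (pderiv i p) := by
  simp [dirDeriv_eq_sum_pderiv]

theorem eval_dirDeriv_dirDeriv [Fintype σ] (v : σ → ℝ) (p : MvPolynomial σ ℝ) :
    eval u (dirDeriv v (dirDeriv v p)) =
      ∑ i, ∑ j, v i * eval u (pderiv i (pderiv j p)) * v j := by
  rw [eval_dirDeriv]
  refine Finset.sum_congr rfl fun i _ => ?_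
  simp only [dirDeriv_eq_sum_pderiv v p, map_sum, Derivation.leibniz, pderiv_C, smul_eq_mul,
    mul_zero, add_zero, map_mul, eval_C, Finset.mul_sum]
  exact Finset.sum_congr rfl fun j _ => by ring

theorem continuous_eval_dirDeriv [Finite σ] (u : σ → ℝ) (p : MvPolynomial σ ℝ) :
    Continuous fun v => eval u (dirDeriv v p) := by
  cases nonempty_fintype σ
  simp only [eval_dirDeriv]
  fun_prop

theorem continuous_eval_dirDeriv_dirDeriv [Finite σ] (u : σ → ℝ) (p : MvPolynomial σ ℝ) :
    Continuous fun v => eval u (dirDeriv v (dirDeriv v p)) := by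
  cases nonempty_fintype σ
  simp only [eval_dirDeriv_dirDeriv]
  fun_prop

open Classical in
theorem exists_forall_pos_add_penalty [Finite σ] {L : MvPolynomial σ ℝ}
    (hL : ∀ v, v ≠ 0 → (∀ j ∈ E, eval u (dirDeriv v (c j)) = 0) →
      (∀ j ∈ I, eval u (c j) = 0 → eval u (dirDeriv v (c j)) = 0) →
      0 < eval u (dirDeriv v (dirDeriv v L))) :
    ∃ a : ℝ, ∀ v, v ≠ 0 → 0 < eval u (dirDeriv v (dirDeriv v L))
      + a * (∑ j ∈ E, eval u (dirDeriv v (c j)) ^ 2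
        + ∑ j ∈ I, if eval u (c j) = 0 then eval u (dirDeriv v (c j)) ^ 2 else 0) := by
  cases nonempty_fintype σ
  have sumE_nonneg : ∀ v, 0 ≤ ∑ j ∈ E, eval u (dirDeriv v (c j)) ^ 2 := fun v =>
    Finset.sum_nonneg fun j _ => sq_nonneg _
  have termI_nonneg : ∀ v, ∀ j ∈ I,
      0 ≤ if eval u (c j) = 0 then eval u (dirDeriv v (c j)) ^ 2 else 0 := fun v j _ => by
    positivity
  refine exists_forall_pos_add_mul_of_quadratic (continuous_eval_dirDeriv_dirDeriv u L) ?_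
    (fun t v => ?_) (fun t v => ?_)
    (fun v => add_nonneg (sumE_nonneg v) (Finset.sum_nonneg (termI_nonneg v)))
    fun v hv hzero => hL v hv ?_ ?_
  · refine (continuous_finsetSum _ fun j _ => (continuous_eval_dirDeriv u _).pow 2).add
      (continuous_finsetSum _ fun j _ => ?_)
    split_ifs
    exacts [(continuous_eval_dirDeriv u _).pow 2, continuous_const]
  · simp only [dirDeriv_smul, Derivation.smul_apply, Derivation.map_smul, smul_eval]
    ring
  · simp only [dirDeriv_smul, Derivation.smul_apply, smul_eval, mul_pow, mul_add, Finset.mul_sum,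
      mul_ite, mul_zero]
  all_goals
    obtain ⟨hE, hI⟩ := (add_eq_zero_iff_of_nonneg (sumE_nonneg v)
      (Finset.sum_nonneg (termI_nonneg v))).1 hzero
  · exact fun j hj => pow_eq_zero_iff two_ne_zero |>.1
      ((Finset.sum_eq_zero_iff_of_nonneg fun j _ => sq_nonneg _).1 hE j hj)
  · intro j hj hc
    have := (Finset.sum_eq_zero_iff_of_nonneg (termI_nonneg v)).1 hI j hj
    rwa [if_pos hc, pow_eq_zero_iff two_ne_zero] at this

theorem StrictKKTAt.exists_isNondegenerateZero_multiplierResidual [Fintype σ]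
    (h : StrictKKTAt E I c f u) (hE : ∀ j ∈ E, eval u (c j) = 0) :
    ∃ s φ : ι → MvPolynomial σ ℝ, (∀ j ∈ I, eval u (c j) ≠ 0 → s j = 0) ∧
      IsNondegenerateZero (multiplierResidual E I c s φ f (eval u f)) u := by
  obtain ⟨lamE, lamI, hgrad, hcompl, hstrict, hhess⟩ := h
  obtain ⟨a, ha⟩ := exists_forall_pos_add_penalty hhess
  choose! s hs_zero hs using fun j hj => exists_sq_multiplier_of_strict_complementarity
    (hcompl j hj).2 (hstrict j hj) a
  choose! φ hφ using fun j hj => exists_multiplier_of_active (hE j hj) (lamE j) a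
  refine ⟨s, φ, hs_zero, isNondegenerateZero_of_hessian_pos ?_ (fun v => ?_) fun v hv => ?_⟩
  · have hI : ∀ j ∈ I, eval u (c j) * eval u (s j) ^ 2 = 0 := fun j hj => by
      by_cases hc : eval u (c j) = 0 <;> simp [hc, hs_zero j hj]
    rw [eval_multiplierResidual hE, Finset.sum_eq_zero hI, sub_self, sub_zero]
  · rw [← hgrad v, eval_dirDeriv_lagrangian, multiplierResidual]
    simp only [map_sub, map_sum, derivation_C, Finset.sum_congr rfl fun j hj => (hs j hj v).1,
      Finset.sum_congr rfl fun j hj => (hφ j hj v).1, map_zero]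
    ring
  · refine (ha v hv).trans_eq ?_
    rw [eval_dirDeriv_dirDeriv_lagrangian, multiplierResidual]
    simp only [map_sub, map_sum, derivation_C, Finset.sum_congr rfl fun j hj => (hs j hj v).2,
      Finset.sum_congr rfl fun j hj => (hφ j hj v).2, map_zero, Finset.sum_sub_distrib,
      ← Finset.mul_sum]
    ring

end LocalCertificates

section GlobalCertificates

open Topology Filter

theorem finite_setOf_isMinOn_of_eventually_lt {X : Type*} [TopologicalSpace X] {K : Set X}
    {g : X → ℝ} (hK : IsCompact K) (hg : Continuous g)
    (hlt : ∀ u ∈ K, IsMinOn g K u → ∀ᶠ x in 𝓝 u, x ∈ K → x ≠ u → g u < g x) :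
    {u ∈ K | IsMinOn g K u}.Finite := by
  by_contra hinf
  obtain ⟨u, hu, hacc⟩ :=
    Set.Infinite.exists_accPt_of_subset_isCompact hinf hK fun x hx => hx.1
  have frequently_min := accPt_iff_frequently.1 hacc
  have u_min : IsMinOn g K u := fun y hy =>
    (isClosed_le hg continuous_const).mem_of_frequently_of_tendsto
      (frequently_min.mono fun x hx => hx.2.2 hy) tendsto_id
  obtain ⟨x, ⟨hxu, hxK, hx⟩, hlt⟩ := (frequently_min.and_eventually (hlt u hu u_min)).exists
  exact (hlt hxK hxu).not_ge (hx hu)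

theorem exists_forall_pow_mul_lt {X : Type*} [TopologicalSpace X] {K S : Set X}
    {e h g : X → ℝ} (hK : IsCompact K) (he : Continuous e) (hh : Continuous h) (hg : Continuous g)
    (he_nonneg : ∀ x ∈ K, 0 ≤ e x) (he_le : ∀ x ∈ K, e x ≤ 1) (hh_nonneg : ∀ x ∈ K, 0 ≤ h x)
    (hS : ∀ x ∈ S, ∀ᶠ y in 𝓝 x, y ∈ K → y ∉ S → h y < g y)
    (he_lt : ∀ x ∈ K, x ∉ S → e x < 1) (hg_pos : ∀ x ∈ K, x ∉ S → 0 < g x) :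
    ∃ m : ℕ, ∀ x ∈ K, x ∉ S → e x ^ m * h x < g x := by
  suffices ∃ m₀ : ℕ, ∀ m ≥ m₀, ∀ x ∈ K, x ∈ K → x ∉ S → e x ^ m * h x < g x by
    obtain ⟨m, hm⟩ := this
    exact ⟨m, fun x hx => hm m le_rfl x hx hx⟩
  refine hK.induction_on (p := fun T => ∃ m₀ : ℕ, ∀ m ≥ m₀, ∀ x ∈ T, x ∈ K → x ∉ S →
    e x ^ m * h x < g x) ⟨0, by simp⟩ (fun T T' hT ⟨m₀, hm₀⟩ => ⟨m₀, fun m hm x hx =>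
      hm₀ m hm x (hT hx)⟩) ?_ fun x hx => ?_
  · rintro T T' ⟨m₁, hm₁⟩ ⟨m₂, hm₂⟩
    exact ⟨max m₁ m₂, fun m hm x hx => hx.elim (hm₁ m (le_of_max_le_left hm) x)
      (hm₂ m (le_of_max_le_right hm) x)⟩
  · suffices ∃ m₀ : ℕ, ∀ᶠ y in 𝓝 x, y ∈ K → y ∉ S → e y ^ m₀ * h y < g y by
      obtain ⟨m₀, hm₀⟩ := this
      refine ⟨_, mem_nhdsWithin_of_mem_nhds hm₀, m₀, fun m hm y hy hyK hyS => ?_⟩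
      exact (mul_le_mul_of_nonneg_right (pow_le_pow_of_le_one (he_nonneg y hyK) (he_le y hyK) hm)
        (hh_nonneg y hyK)).trans_lt (hy hyK hyS)
    by_cases hxS : x ∈ S
    · exact ⟨0, by simpa only [pow_zero, one_mul] using hS x hxS⟩
    · have tendsto_zero : Tendsto (fun m => e x ^ m * h x) atTop (𝓝 0) := by
        simpa only [zero_mul] using (tendsto_pow_atTop_nhds_zero_of_lt_one (he_nonneg x hx)
          (he_lt x hx hxS)).mul_const (h x)
      obtain ⟨m, hm⟩ := (tendsto_zero.eventually_lt_const (hg_pos x hx hxS)).exists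
      exact ⟨m, (((he.pow m).mul hh).continuousAt.eventually_lt hg.continuousAt hm).mono
        fun y hy _ _ => hy⟩

section Gluing

variable {σ : Type*}

theorem exists_damping_polynomial [Finite σ] (S : Finset (σ → ℝ)) {K : Set (σ → ℝ)}
    (hK : IsCompact K) :
    ∃ e : MvPolynomial σ ℝ, (∀ u ∈ S, e - 1 ∈ pointIdeal u ^ 2) ∧
      ∀ x ∈ K, 0 ≤ eval x e ∧ eval x e ≤ 1 ∧ (x ∉ S → eval x e < 1) := by
  cases nonempty_fintype σ
  set θ : MvPolynomial σ ℝ := ∏ u ∈ S, ∑ i, (X i - C (u i)) ^ 2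
  have eval_θ : ∀ x, eval x θ = ∏ u ∈ S, ∑ i, (x i - u i) ^ 2 := fun x => by simp [θ, map_prod]
  have θ_nonneg : ∀ x, 0 ≤ eval x θ := fun x => by
    rw [eval_θ]
    positivity
  have θ_pos : ∀ x ∉ S, 0 < eval x θ := fun x hx => by
    rw [eval_θ]
    refine Finset.prod_pos fun u hu => ?_
    obtain ⟨i, hi⟩ := Function.ne_iff.1 (show x ≠ u from fun h => hx (h ▸ hu))
    exact Finset.sum_pos' (fun j _ => sq_nonneg _)
      ⟨i, Finset.mem_univ i, sq_pos_of_ne_zero (sub_ne_zero.2 hi)⟩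
  obtain ⟨M, hM⟩ := hK.exists_bound_of_continuousOn (MvPolynomial.continuous_eval θ).continuousOn
  have θ_le : ∀ x ∈ K, eval x θ ≤ |M| + 1 := fun x hx => by
    linarith [(le_abs_self _).trans (hM x hx), le_abs_self M]
  have M_pos : 0 < |M| + 1 := by positivity
  refine ⟨1 - C (|M| + 1)⁻¹ * θ, fun u hu => ?_, fun x hx => ?_⟩
  · rw [sub_sub_cancel_left, neg_mem_iff]
    refine Ideal.mul_mem_left _ _ (Ideal.mem_of_dvd _ (Finset.dvd_prod_of_mem _ hu) ?_)
    exact Ideal.sum_mem _ fun i _ => Ideal.pow_mem_pow (X_sub_C_mem_pointIdeal u i) 2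
  · simp only [map_sub, map_mul, map_one, eval_C, sub_nonneg, sub_le_self_iff, sub_lt_self_iff]
    refine ⟨(inv_mul_le_one₀ M_pos).2 (θ_le x hx), mul_nonneg (inv_nonneg.2 M_pos.le) (θ_nonneg x),
      fun hxS => mul_pos (inv_pos.2 M_pos) (θ_pos x hxS)⟩

variable {ι : Type*} {E I : Finset ι} {c : ι → MvPolynomial σ ℝ} {f : MvPolynomial σ ℝ}

theorem IsNondegenerateZero.multiplierResidual_congr [Fintype σ] {u : σ → ℝ} {γ : ℝ}
    {s s' φ φ' : ι → MvPolynomial σ ℝ}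
    (h : IsNondegenerateZero (multiplierResidual E I c s φ f γ) u)
    (hE : ∀ j ∈ E, eval u (c j) = 0) (hs_zero : ∀ j ∈ I, eval u (c j) ≠ 0 → s j = 0)
    (hs : ∀ j ∈ I, s' j - s j ∈ pointIdeal u ^ 2) (hφ : ∀ j ∈ E, φ' j - φ j ∈ pointIdeal u ^ 2) :
    IsNondegenerateZero (multiplierResidual E I c s' φ' f γ) u := by
  have hI_mem : ∑ j ∈ I, c j * (s' j ^ 2 - s j ^ 2) ∈ pointIdeal u ^ 3 := by
    refine Ideal.sum_mem _ fun j hj => ?_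
    by_cases hc : eval u (c j) = 0
    · rw [sq_sub_sq, mul_comm (_ + _), pow_succ', ← mul_assoc]
      exact Ideal.mul_mem_right _ _ (Ideal.mul_mem_mul hc (hs j hj))
    · have hs'_mem := hs j hj
      rw [hs_zero j hj hc, sub_zero] at hs'_mem
      rw [hs_zero j hj hc, zero_pow two_ne_zero, sub_zero]
      refine Ideal.mul_mem_left _ _ (Ideal.pow_le_pow_right (show 3 ≤ 2 * 2 by norm_num) ?_)
      rw [pow_mul]
      exact Ideal.pow_mem_pow hs'_mem 2
  have hE_mem : ∑ j ∈ E, c j * (φ' j - φ j) ∈ pointIdeal u ^ 3 := by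
    refine Ideal.sum_mem _ fun j hj => ?_
    rw [pow_succ']
    exact Ideal.mul_mem_mul (hE j hj) (hφ j hj)
  refine h.of_sub_mem ?_
  convert neg_mem (add_mem hI_mem hE_mem) using 1
  simp only [multiplierResidual, mul_sub, Finset.sum_sub_distrib]
  ring

end Gluing

variable {n : ℕ} {E I : Finset ℕ} {c : ℕ → RPoly n} {f : RPoly n}

theorem sum_eval_mul_sq_nonneg {x : Fin n → ℝ} (hx : x ∈ Kset E I c) (s : ℕ → RPoly n) :
    0 ≤ ∑ j ∈ I, eval x (c j) * eval x (s j) ^ 2 :=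
  Finset.sum_nonneg fun j hj => mul_nonneg (hx.2 j hj) (sq_nonneg _)

theorem exists_global_multipliers (hK : IsCompact (Kset E I c)) {S : Finset (Fin n → ℝ)} {γ : ℝ}
    (hSK : ∀ u ∈ S, u ∈ Kset E I c) (hf : ∀ x ∈ Kset E I c, x ∉ S → γ < eval x f)
    (hloc : ∀ u ∈ S, ∃ s φ : ℕ → RPoly n, (∀ j ∈ I, eval u (c j) ≠ 0 → s j = 0) ∧
      IsNondegenerateZero (multiplierResidual E I c s φ f γ) u) :
    ∃ s φ : ℕ → RPoly n, (∀ u ∈ S, IsNondegenerateZero (multiplierResidual E I c s φ f γ) u) ∧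
      ∀ x ∈ Kset E I c, x ∉ S → 0 < eval x (multiplierResidual E I c s φ f γ) := by
  choose! s φ hs_zero hres using hloc
  choose s₀ hs₀ using fun j => exists_forall_sub_mem_pointIdeal_pow S 2 fun u => s u j
  choose φ₀ hφ₀ using fun j => exists_forall_sub_mem_pointIdeal_pow S 2 fun u => φ u j
  obtain ⟨e, he_mem, he⟩ := exists_damping_polynomial S hK
  have damped : ∀ m : ℕ, ∀ u ∈ S,
      IsNondegenerateZero (multiplierResidual E I c (fun j => e ^ m * s₀ j) φ₀ f γ) u := by
    refine fun m u hu => (hres u hu).multiplierResidual_congr (hSK u hu).1 (hs_zero u hu)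
      (fun j _ => ?_) fun j _ => hφ₀ j u hu
    have : e ^ m - 1 ∈ pointIdeal u ^ 2 :=
      Ideal.mem_of_dvd _ (by simpa only [one_pow] using sub_dvd_pow_sub_pow e 1 m) (he_mem u hu)
    convert add_mem (Ideal.mul_mem_left _ (s₀ j) this) (hs₀ j u hu) using 1
    ring
  have eval_damped : ∀ m : ℕ, ∀ x ∈ Kset E I c,
      eval x (multiplierResidual E I c (fun j => e ^ m * s₀ j) φ₀ f γ) = eval x f - γ
        - (eval x e ^ 2) ^ m * ∑ j ∈ I, eval x (c j) * eval x (s₀ j) ^ 2 := fun m x hx => by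
    rw [eval_multiplierResidual hx.1, Finset.mul_sum]
    congr 1
    refine Finset.sum_congr rfl fun j _ => ?_
    rw [map_mul, map_pow]
    ring
  obtain ⟨m, hm⟩ := exists_forall_pow_mul_lt (S := S) (e := fun x => eval x e ^ 2)
    (h := fun x => ∑ j ∈ I, eval x (c j) * eval x (s₀ j) ^ 2) (g := fun x => eval x f - γ) hK
    ((MvPolynomial.continuous_eval e).pow 2)
    (continuous_finsetSum _ fun j _ =>
      (MvPolynomial.continuous_eval _).mul ((MvPolynomial.continuous_eval _).pow 2))
    ((MvPolynomial.continuous_eval f).sub continuous_const) (fun x _ => sq_nonneg _)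
    (fun x hx => pow_le_one₀ (he x hx).1 (he x hx).2.1) (fun x hx => sum_eval_mul_sq_nonneg hx s₀)
    (fun u hu => (damped 0 u hu).eventually_pos.mono fun x hx hxK hxS => by
      have := hx fun h => hxS (h ▸ hu)
      rwa [eval_damped 0 x hxK, pow_zero, one_mul, sub_pos] at this)
    (fun x hx hxS => pow_lt_one₀ (he x hx).1 ((he x hx).2.2 hxS) two_ne_zero)
    fun x hx hxS => sub_pos.2 (hf x hx hxS)
  refine ⟨_, φ₀, damped m, fun x hx hxS => ?_⟩
  rw [eval_damped m x hx, sub_pos]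
  exact hm x hx hxS

end GlobalCertificates

section ConstraintModule

open Topology

variable {n : ℕ} {E I : Finset ℕ} {c : ℕ → RPoly n} {f p q : RPoly n}

/-- The quadratic module `Ideal(c_eq) + QM(c_in)`, presented as the convex cone spanned by the
squares, the multiples `c_j p²` (`j ∈ I`) and the multiples `c_j p` (`j ∈ E`). -/
noncomputable def constraintModule (E I : Finset ℕ) (c : ℕ → RPoly n) : PointedCone ℝ (RPoly n) :=
  PointedCone.hull ℝ ({q | ∃ p, q = p ^ 2} ∪ {q | ∃ j ∈ I, ∃ p, q = c j * p ^ 2} ∪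
    {q | ∃ j ∈ E, ∃ p, q = c j * p})

theorem sq_mem_constraintModule (p : RPoly n) : p ^ 2 ∈ constraintModule E I c :=
  Submodule.subset_span (.inl (.inl ⟨p, rfl⟩))

theorem mul_sq_mem_constraintModule {j : ℕ} (hj : j ∈ I) (p : RPoly n) :
    c j * p ^ 2 ∈ constraintModule E I c :=
  Submodule.subset_span (.inl (.inr ⟨j, hj, p, rfl⟩))

theorem mul_mem_constraintModule {j : ℕ} (hj : j ∈ E) (p : RPoly n) :
    c j * p ∈ constraintModule E I c :=
  Submodule.subset_span (.inr ⟨j, hj, p, rfl⟩)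

theorem constraintModule_induction {P : ∀ q, q ∈ constraintModule E I c → Prop}
    (sq : ∀ p, P (p ^ 2) (sq_mem_constraintModule p))
    (ineq : ∀ j (hj : j ∈ I) p, P (c j * p ^ 2) (mul_sq_mem_constraintModule hj p))
    (eq : ∀ j (hj : j ∈ E) p, P (c j * p) (mul_mem_constraintModule hj p))
    (add : ∀ p q hp hq, P p hp → P q hq → P (p + q) (add_mem hp hq))
    (smul : ∀ (r : ℝ) p (hr : 0 ≤ r) hp, P p hp →
      P (r • p) ((constraintModule E I c).smul_mem hr hp))
    {q : RPoly n} (hq : q ∈ constraintModule E I c) : P q hq := by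
  refine Submodule.span_induction ?_ (by simpa using sq 0) add (fun r p hp => smul r p r.2 hp) hq
  rintro _ ((⟨p, rfl⟩ | ⟨j, hj, p, rfl⟩) | ⟨j, hj, p, rfl⟩)
  exacts [sq p, ineq j hj p, eq j hj p]

theorem isQuadraticModule_constraintModule : IsQuadraticModule (constraintModule E I c) where
  one_mem := by simpa using sq_mem_constraintModule 1
  sq_mul_mem a q hq := by
    induction hq using constraintModule_induction with
    | sq p => simpa only [mul_pow] using sq_mem_constraintModule (a * p)
    | ineq j hj p =>
      simpa only [mul_pow, mul_left_comm] using mul_sq_mem_constraintModule hj (a * p)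
    | eq j hj p => simpa only [mul_left_comm] using mul_mem_constraintModule hj (a ^ 2 * p)
    | add p q _ _ hp hq => simpa only [mul_add] using add_mem hp hq
    | smul r p hr _ hp =>
      simpa only [mul_smul_comm] using (constraintModule E I c).smul_mem hr hp

theorem mem_constraintModule_of_mem_idealFull (hp : p ∈ IdealFull E c) :
    p ∈ constraintModule E I c := by
  obtain ⟨q, rfl⟩ := (Submodule.mem_span_image_finset_iff_exists_fun' _).1 hp
  refine sum_mem fun j hj => ?_
  rw [smul_eq_mul, mul_comm]
  exact mul_mem_constraintModule hj (q j)

theorem IsSOS.mul_mem_constraintModule (hp : IsSOS p)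
    (hq : ∀ a, q * a ^ 2 ∈ constraintModule E I c) :
    q * p ∈ constraintModule E I c := by
  obtain ⟨L, rfl⟩ := hp
  rw [← List.sum_map_mul_left]
  refine list_sum_mem fun r hr => ?_
  obtain ⟨a, -, rfl⟩ := List.mem_map.1 hr
  exact hq a

theorem mem_constraintModule_of_mem_qModFull (hp : p ∈ QModFull I c) :
    p ∈ constraintModule E I c := by
  obtain ⟨σ₀, σ, hσ₀, hσ, rfl⟩ := hp
  refine add_mem ?_ (sum_mem fun j hj => (hσ j hj).mul_mem_constraintModule fun a =>
    mul_sq_mem_constraintModule hj a)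
  simpa only [one_mul] using hσ₀.mul_mem_constraintModule (E := E) (I := I) (c := c) (q := 1)
    fun a => by simpa only [one_mul] using sq_mem_constraintModule a

theorem ArchimedeanQM.exists_sub_sum_sq_mem (h : ArchimedeanQM E I c) :
    ∃ R : ℝ, C R - ∑ i, X i ^ 2 ∈ constraintModule E I c := by
  obtain ⟨R, -, p₁, hp₁, p₂, hp₂, heq⟩ := h
  exact ⟨R, heq ▸ add_mem (mem_constraintModule_of_mem_idealFull hp₁)
    (mem_constraintModule_of_mem_qModFull hp₂)⟩

theorem eval_nonneg_of_mem_constraintModule {x : Fin n → ℝ} (hx : x ∈ Kset E I c)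
    (hq : q ∈ constraintModule E I c) : 0 ≤ eval x q := by
  induction hq using constraintModule_induction with
  | sq p => simpa only [map_pow] using sq_nonneg _
  | ineq j hj p => simpa only [map_mul, map_pow] using mul_nonneg (hx.2 j hj) (sq_nonneg _)
  | eq j hj p => rw [map_mul, hx.1 j hj, zero_mul]
  | add p q _ _ hp hq => simpa only [map_add] using add_nonneg hp hq
  | smul r p hr _ hp => simpa only [smul_eval] using mul_nonneg hr hp

theorem mem_Kset_of_forall_eval_nonneg {x : Fin n → ℝ}
    (hx : ∀ q ∈ constraintModule E I c, 0 ≤ eval x q) : x ∈ Kset E I c := by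
  refine ⟨fun j hj => le_antisymm ?_ ?_, fun j hj => ?_⟩
  · simpa using hx _ (mul_mem_constraintModule hj (-1))
  · simpa using hx _ (mul_mem_constraintModule hj 1)
  · simpa using hx _ (mul_sq_mem_constraintModule hj 1)

theorem isClosed_Kset : IsClosed (Kset E I c) := by
  simp only [Kset, Set.ofPred_and, Set.ofPred_forall]
  exact (isClosed_biInter fun j _ => isClosed_eq (continuous_eval _) continuous_const).inter
    (isClosed_biInter fun j _ => isClosed_le continuous_const (continuous_eval _))

theorem ArchimedeanQM.isCompact_Kset (h : ArchimedeanQM E I c) : IsCompact (Kset E I c) := by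
  obtain ⟨R, hR⟩ := h.exists_sub_sum_sq_mem
  refine (isCompact_univ_pi fun _ : Fin n => isCompact_Icc (a := -√R) (b := √R)).of_isClosed_subset
    isClosed_Kset fun x hx i _ => ?_
  have sum_le : ∑ j, x j ^ 2 ≤ R := by
    simpa using eval_nonneg_of_mem_constraintModule hx hR
  exact abs_le.1 <| Real.abs_le_sqrt <|
    (Finset.single_le_sum (fun j _ => sq_nonneg (x j)) (Finset.mem_univ i)).trans sum_le

theorem sub_smul_sq_mem_of_multiplierResidual {γ ε : ℝ} {s φ : ℕ → RPoly n}
    (h : multiplierResidual E I c s φ f γ - ε • p ^ 2 ∈ constraintModule E I c) :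
    f - C γ - ε • p ^ 2 ∈ constraintModule E I c := by
  have hI : ∑ j ∈ I, c j * s j ^ 2 ∈ constraintModule E I c :=
    sum_mem fun j hj => mul_sq_mem_constraintModule hj _
  have hE : ∑ j ∈ E, c j * φ j ∈ constraintModule E I c :=
    sum_mem fun j hj => mul_mem_constraintModule hj _
  convert add_mem h (add_mem hI hE) using 1
  rw [multiplierResidual]
  ring

theorem StrictKKTAt.eventually_eval_lt {u : Fin n → ℝ} (h : StrictKKTAt E I c f u)
    (hu : u ∈ Kset E I c) :
    ∀ᶠ x in 𝓝 u, x ∈ Kset E I c → x ≠ u → eval u f < eval x f := by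
  obtain ⟨s, φ, -, hres⟩ := h.exists_isNondegenerateZero_multiplierResidual hu.1
  filter_upwards [hres.eventually_pos] with x hpos hx hxu
  have := hpos hxu
  rw [eval_multiplierResidual hx.1] at this
  linarith [sum_eval_mul_sq_nonneg hx s]

theorem exists_forall_sub_smul_sq_mem_constraintModule (hK : (Kset E I c).Nonempty)
    (harch : ArchimedeanQM E I c)
    (hkkt : ∀ u ∈ Kset E I c, IsMinOn (fun x => eval x f) (Kset E I c) u → StrictKKTAt E I c f u) :
    ∃ u₀ ∈ Kset E I c, ∃ S : Finset (Fin n → ℝ), ∀ p : RPoly n, (∀ u ∈ S, eval u p = 0) →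
      ∃ ε : ℝ, 0 < ε ∧ f - C (eval u₀ f) - ε • p ^ 2 ∈ constraintModule E I c := by
  have compact := harch.isCompact_Kset
  obtain ⟨u₀, hu₀, hmin⟩ := compact.exists_isMinOn hK (continuous_eval f).continuousOn
  have finite := finite_setOf_isMinOn_of_eventually_lt compact (continuous_eval f)
    fun u hu humin => (hkkt u hu humin).eventually_eval_lt hu
  have value : ∀ u ∈ finite.toFinset, eval u f = eval u₀ f := fun u hu => by
    obtain ⟨huK, humin⟩ := finite.mem_toFinset.1 hu
    exact le_antisymm (humin hu₀) (hmin huK)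
  obtain ⟨s, φ, hzero, hpos⟩ := exists_global_multipliers (f := f) (γ := eval u₀ f) compact
    (S := finite.toFinset) (fun u hu => (finite.mem_toFinset.1 hu).1) (fun x hx hxS => by
      contrapose! hxS
      exact finite.mem_toFinset.2 ⟨hx, fun y hy => hxS.trans (hmin hy)⟩) fun u hu => by
      obtain ⟨huK, humin⟩ := finite.mem_toFinset.1 hu
      rw [← value u hu]
      exact (hkkt u huK humin).exists_isNondegenerateZero_multiplierResidual huK.1
  obtain ⟨R, hR⟩ := harch.exists_sub_sum_sq_mem
  refine ⟨u₀, hu₀, finite.toFinset, fun p hp => ?_⟩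
  obtain ⟨ε, hε, hmem⟩ := isQuadraticModule_constraintModule.exists_sub_smul_sq_mem
    (isArchimedeanCone_of_sub_sum_sq_mem isQuadraticModule_constraintModule hR) hzero
    (fun x hx hq => hpos x (mem_Kset_of_forall_eval_nonneg hq) hx) hp
  exact ⟨ε, hε, sub_smul_sq_mem_of_multiplierResidual hmem⟩

end ConstraintModule

section Moments

variable {n : ℕ} {w : (Fin n →₀ ℕ) → ℝ}

/-- The Riesz functional `p ↦ ⟨p, w⟩` of the moment sequence `w`. -/
noncomputable def rieszFunctional (w : (Fin n →₀ ℕ) → ℝ) : RPoly n →ₗ[ℝ] ℝ :=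
  (basisMonomials (Fin n) ℝ).constr ℝ w

theorem rieszFunctional_monomial (w : (Fin n →₀ ℕ) → ℝ) (α : Fin n →₀ ℕ) (r : ℝ) :
    rieszFunctional w (monomial α r) = r * w α := by
  have basis_value : rieszFunctional w (monomial α 1) = w α := by
    simpa [rieszFunctional] using (basisMonomials (Fin n) ℝ).constr_basis ℝ w α
  rw [← mul_one r, ← smul_eq_mul, ← smul_monomial, map_smul, basis_value, smul_eq_mul, smul_eq_mul,
    mul_one]

theorem rieszFunctional_apply (w : (Fin n →₀ ℕ) → ℝ) (p : RPoly n) :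
    rieszFunctional w p = pairing p w := by
  conv_lhs => rw [p.as_sum]
  simp only [map_sum, rieszFunctional_monomial, pairing]

theorem degree_eq_mdeg (α : Fin n →₀ ℕ) : (α.sum fun _ e => e) = mdeg α :=
  Finsupp.sum_fintype _ _ fun _ => rfl

theorem totalDegree_monomial_le {t : ℕ} (α : {α : Fin n →₀ ℕ // mdeg α ≤ t}) :
    (monomial α.1 (1 : ℝ)).totalDegree ≤ t := by
  rw [totalDegree_monomial _ one_ne_zero, degree_eq_mdeg]
  exact α.2

theorem sum_monomial_coeff_of_totalDegree_le {t : ℕ} {p : RPoly n} (hp : p.totalDegree ≤ t) :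
    ∑ γ : {α : Fin n →₀ ℕ // mdeg α ≤ t}, monomial γ.1 (p.coeff γ.1) = p := by
  classical
  ext α
  simp only [coeff_sum, coeff_monomial]
  by_cases hα : mdeg α ≤ t
  · rw [Fintype.sum_eq_single ⟨α, hα⟩ fun γ hγ => if_neg fun h => hγ (Subtype.ext h), if_pos rfl]
  · have hcoeff : p.coeff α = 0 := by
      by_contra hne
      exact hα (degree_eq_mdeg α ▸ (le_totalDegree (mem_support_iff.2 hne)).trans hp)
    rw [hcoeff]
    exact Finset.sum_eq_zero fun γ _ => if_neg fun h : γ.1 = α => hα (h ▸ γ.2)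

theorem rieszFunctional_mul {t : ℕ} (w : (Fin n →₀ ℕ) → ℝ) {p q : RPoly n}
    (hp : p.totalDegree ≤ t) (hq : q.totalDegree ≤ t) :
    rieszFunctional w (p * q) =
      ∑ γ, (∑ δ, p.coeff δ.1 * momentMatrix t w δ γ) * q.coeff γ.1 := by
  conv_lhs => rw [← sum_monomial_coeff_of_totalDegree_le hp,
    ← sum_monomial_coeff_of_totalDegree_le hq, Finset.sum_mul_sum, Finset.sum_comm]
  simp only [map_sum, monomial_mul, rieszFunctional_monomial, momentMatrix, Finset.sum_mul]
  exact Finset.sum_congr rfl fun γ _ => Finset.sum_congr rfl fun δ _ => by ring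

theorem momentMatrix_apply_eq_rieszFunctional {t : ℕ} (α β : {α : Fin n →₀ ℕ // mdeg α ≤ t}) :
    momentMatrix t w α β = rieszFunctional w (monomial α.1 1 * monomial β.1 1) := by
  simp [monomial_mul, rieszFunctional_monomial, momentMatrix]

theorem rank_momentMatrix_mono {s t : ℕ} (hst : s ≤ t) (w : (Fin n →₀ ℕ) → ℝ) :
    (momentMatrix s w).rank ≤ (momentMatrix t w).rank :=
  Matrix.rank_submatrix_le (A := momentMatrix t w)
    (r := fun α : {α : Fin n →₀ ℕ // mdeg α ≤ s} => ⟨α.1, α.2.trans hst⟩)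
    (c := fun α : {α : Fin n →₀ ℕ // mdeg α ≤ s} => ⟨α.1, α.2.trans hst⟩)

theorem rieszFunctional_mul_eq_of_sq_sub_nonpos {t : ℕ}
    (hw : ∀ p : RPoly n, p.totalDegree ≤ t → 0 ≤ rieszFunctional w (p ^ 2)) {p r q : RPoly n}
    (hp : p.totalDegree ≤ t) (hr : r.totalDegree ≤ t) (hq : q.totalDegree ≤ t)
    (h : rieszFunctional w ((p - r) ^ 2) ≤ 0) :
    rieszFunctional w (p * q) = rieszFunctional w (r * q) := by
  have cauchy_schwarz : rieszFunctional w ((p - r) * q) ^ 2 ≤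
      rieszFunctional w ((p - r) ^ 2) * rieszFunctional w (q ^ 2) :=
    sq_apply_mul_le (W := restrictTotalDegree (Fin n) ℝ t)
      (fun a ha => hw a ((mem_restrictTotalDegree _ _ _).1 ha))
      ((mem_restrictTotalDegree _ _ _).2 ((totalDegree_sub _ _).trans (max_le hp hr)))
      ((mem_restrictTotalDegree _ _ _).2 hq)
  have vanishes : rieszFunctional w ((p - r) * q) = 0 := pow_eq_zero_iff two_ne_zero |>.1 <|
    le_antisymm (cauchy_schwarz.trans (mul_nonpos_of_nonpos_of_nonneg h (hw q hq))) (sq_nonneg _)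
  rwa [sub_mul, map_sub, sub_eq_zero] at vanishes

/-- Modulo the kernel of the form `(p, q) ↦ ⟨pq, w⟩` every monomial of degree at most `t` has a
representative of degree at most `s`, so `M_t = R M_s Rᵀ` for the matrix `R` of the coefficients of
these representatives. -/
theorem rank_momentMatrix_eq_of_sq_sub_nonpos {s t : ℕ} (hst : s ≤ t)
    (hw : ∀ p : RPoly n, p.totalDegree ≤ t → 0 ≤ rieszFunctional w (p ^ 2))
    {r : {α : Fin n →₀ ℕ // mdeg α ≤ t} → RPoly n} (hr : ∀ α, (r α).totalDegree ≤ s)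
    (h : ∀ α, rieszFunctional w ((monomial α.1 1 - r α) ^ 2) ≤ 0) :
    (momentMatrix s w).rank = (momentMatrix t w).rank := by
  refine le_antisymm (rank_momentMatrix_mono hst w) ?_
  let R : Matrix {α : Fin n →₀ ℕ // mdeg α ≤ t} {α : Fin n →₀ ℕ // mdeg α ≤ s} ℝ :=
    .of fun α γ => (r α).coeff γ.1
  have factorization : momentMatrix t w = R * momentMatrix s w * R.transpose := by
    ext α β
    have hrt : ∀ α, (r α).totalDegree ≤ t := fun α => (hr α).trans hst
    calc momentMatrix t w α β
        = rieszFunctional w (monomial α.1 1 * monomial β.1 1) :=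
          momentMatrix_apply_eq_rieszFunctional α β
      _ = rieszFunctional w (monomial β.1 1 * r α) := by
          rw [rieszFunctional_mul_eq_of_sq_sub_nonpos hw (totalDegree_monomial_le α) (hrt α)
            (totalDegree_monomial_le β) (h α), mul_comm]
      _ = rieszFunctional w (r α * r β) := by
          rw [rieszFunctional_mul_eq_of_sq_sub_nonpos hw (totalDegree_monomial_le β) (hrt β)
            (hrt α) (h β), mul_comm]
      _ = (R * momentMatrix s w * R.transpose) α β := by
          rw [rieszFunctional_mul w (hr α) (hr β)]
          rfl
  rw [factorization]
  exact (Matrix.rank_mul_le_left _ _).trans (Matrix.rank_mul_le_right _ _)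

end Moments

section Relaxations

variable {n : ℕ} {E I : Finset ℕ} {c : ℕ → RPoly n} {f q : RPoly n} {k : ℕ}
  {w : (Fin n →₀ ℕ) → ℝ}

/-- Feasibility of `w` for the `k`th moment relaxation of minimizing over `K`. -/
def IsRelaxationFeasible (E I : Finset ℕ) (c : ℕ → RPoly n) (k : ℕ) (w : (Fin n →₀ ℕ) → ℝ) :
    Prop :=
  w 0 = 1 ∧ MomRelaxPSD E c I c k w

/-- `w` is a minimizer of the `k`th moment relaxation of minimizing `f` over `K`. -/
structure IsRelaxationMinimizer (E I : Finset ℕ) (c : ℕ → RPoly n) (f : RPoly n) (k : ℕ)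
    (w : (Fin n →₀ ℕ) → ℝ) : Prop where
  feasible : IsRelaxationFeasible E I c k w
  pairing_le : ∀ w', IsRelaxationFeasible E I c k w' → pairing f w ≤ pairing f w'

theorem IsRelaxationFeasible.rieszFunctional_C (hw : IsRelaxationFeasible E I c k w) (r : ℝ) :
    rieszFunctional w (C r) = r := by
  rw [C_apply, rieszFunctional_monomial, hw.1, mul_one]

theorem IsRelaxationFeasible.rieszFunctional_sq_nonneg (hw : IsRelaxationFeasible E I c k w)
    {p : RPoly n} (hp : p.totalDegree ≤ k) : 0 ≤ rieszFunctional w (p ^ 2) :=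
  (hw.2.2.2 p hp).trans_eq (rieszFunctional_apply w _).symm

theorem pairing_pointMoments (u : Fin n → ℝ) (p : RPoly n) :
    pairing p (fun α => ∏ i, u i ^ α i) = eval u p :=
  (eval_eq' u p).symm

theorem isRelaxationFeasible_pointMoments {u : Fin n → ℝ} (hu : u ∈ Kset E I c) (k : ℕ) :
    IsRelaxationFeasible E I c k fun α => ∏ i, u i ^ α i := by
  refine ⟨by simp, fun j hj p _ => ?_, fun j hj p _ => ?_, fun p _ => ?_⟩ <;>
    rw [pairing_pointMoments]
  · rw [map_mul, hu.1 j hj, zero_mul]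
  · simpa only [map_mul, map_pow] using mul_nonneg (hu.2 j hj) (sq_nonneg _)
  · simpa only [map_pow] using sq_nonneg _

theorem IsRelaxationMinimizer.rieszFunctional_le_eval (hw : IsRelaxationMinimizer E I c f k w)
    {u : Fin n → ℝ} (hu : u ∈ Kset E I c) : rieszFunctional w f ≤ eval u f := by
  rw [rieszFunctional_apply, ← pairing_pointMoments]
  exact hw.pairing_le _ (isRelaxationFeasible_pointMoments hu k)

open Filter in
theorem eventually_rieszFunctional_nonneg_of_mem_constraintModule
    (hq : q ∈ constraintModule E I c) :
    ∀ᶠ k in atTop, ∀ w, IsRelaxationFeasible E I c k w → 0 ≤ rieszFunctional w q := by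
  induction hq using constraintModule_induction with
  | sq p =>
    filter_upwards [eventually_ge_atTop p.totalDegree] with k hk w hw
    exact hw.rieszFunctional_sq_nonneg hk
  | ineq j hj p =>
    filter_upwards [eventually_ge_atTop (p.totalDegree + ((c j).totalDegree + 1) / 2)]
      with k hk w hw
    exact (hw.2.2.1 j hj p hk).trans_eq (rieszFunctional_apply w _).symm
  | eq j hj p =>
    filter_upwards [eventually_ge_atTop (p.totalDegree + (c j).totalDegree)] with k hk w hw
    rw [rieszFunctional_apply, hw.2.1 j hj p (by lia)]
  | add p q _ _ hp hq =>
    filter_upwards [hp, hq] with k hp hq w hw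
    simpa only [map_add] using add_nonneg (hp w hw) (hq w hw)
  | smul r p hr _ hp =>
    filter_upwards [hp] with k hp w hw
    simpa only [map_smul] using smul_nonneg hr (hp w hw)

open Filter in
theorem eventually_rieszFunctional_sq_nonpos {u : Fin n → ℝ} (hu : u ∈ Kset E I c) {p : RPoly n}
    {ε : ℝ} (hε : 0 < ε) (hp : f - C (eval u f) - ε • p ^ 2 ∈ constraintModule E I c) :
    ∀ᶠ k in atTop, ∀ w, IsRelaxationMinimizer E I c f k w → rieszFunctional w (p ^ 2) ≤ 0 := by
  filter_upwards [eventually_rieszFunctional_nonneg_of_mem_constraintModule hp] with k hk w hw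
  have nonneg := hk w hw.feasible
  simp only [map_sub, map_smul, hw.feasible.rieszFunctional_C, smul_eq_mul] at nonneg
  exact nonpos_of_mul_nonpos_right (by linarith [hw.rieszFunctional_le_eval hu]) hε

theorem exists_forall_exists_interpolant {σ k : Type*} [Field k] (S : Finset (σ → k)) :
    ∃ d : ℕ, ∀ p : MvPolynomial σ k, ∃ r : MvPolynomial σ k, r.totalDegree ≤ d ∧
      ∀ u ∈ S, eval u (p - r) = 0 := by
  classical
  choose e he using exists_forall_eval_eq_ite S
  refine ⟨S.sup fun v => (e v).totalDegree, fun p => ⟨∑ v ∈ S, eval v p • e v, ?_, fun u hu => ?_⟩⟩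
  · exact totalDegree_finsetSum_le fun v hv => (totalDegree_smul_le _ _).trans
      (Finset.le_sup (f := fun v => (e v).totalDegree) hv)
  · simp [he _ u hu, hu]

open Filter in
theorem exists_eventually_forall_rank_momentMatrix_eq (hK : (Kset E I c).Nonempty)
    (harch : ArchimedeanQM E I c)
    (hkkt : ∀ u ∈ Kset E I c, IsMinOn (fun x => eval x f) (Kset E I c) u → StrictKKTAt E I c f u) :
    ∃ d : ℕ, ∀ s t, d ≤ s → s ≤ t → ∀ᶠ k in atTop, ∀ w, IsRelaxationMinimizer E I c f k w →
      (momentMatrix s w).rank = (momentMatrix t w).rank := by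
  obtain ⟨u₀, hu₀, S, cert⟩ := exists_forall_sub_smul_sq_mem_constraintModule hK harch hkkt
  obtain ⟨d, interp⟩ := exists_forall_exists_interpolant S
  choose r hr_deg hr using interp
  refine ⟨d, fun s t hds hst => ?_⟩
  have sq_nonpos : ∀ᶠ k in atTop, ∀ α : {α : Fin n →₀ ℕ // mdeg α ≤ t}, ∀ w,
      IsRelaxationMinimizer E I c f k w →
        rieszFunctional w ((monomial α.1 1 - r (monomial α.1 1)) ^ 2) ≤ 0 :=
    eventually_all.2 fun α => by
      obtain ⟨ε, hε, hmem⟩ := cert _ (hr (monomial α.1 1))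
      exact eventually_rieszFunctional_sq_nonpos hu₀ hε hmem
  filter_upwards [sq_nonpos, eventually_ge_atTop t] with k hk htk w hw
  exact rank_momentMatrix_eq_of_sq_sub_nonpos hst
    (fun p hp => hw.feasible.rieszFunctional_sq_nonneg (hp.trans htk))
    (fun α => (hr_deg _).trans hds) fun α => hk α w hw

theorem OptCondsAt.strictKKTAt {u : Fin n → ℝ} (h : OptCondsAt E c I c f u) :
    StrictKKTAt E I c f u := by
  obtain ⟨-, lamE, lamI, hgrad, hcompl, hstrict, hhess⟩ := h
  refine ⟨lamE, lamI, fun v => ?_, hcompl, hstrict, fun v hv hE hI => ?_⟩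
  · rw [eval_dirDeriv]
    refine Finset.sum_eq_zero fun i _ => mul_eq_zero_of_right _ ?_
    have hgrad_apply : eval u (pderiv i f) = ∑ j ∈ E, lamE j * eval u (pderiv i (c j))
        + ∑ j ∈ I, lamI j * eval u (pderiv i (c j)) := by
      simpa [gradP] using congrFun hgrad i
    simp only [lagrangian, map_sub, map_sum, pderiv_C_mul, map_mul, eval_C, hgrad_apply]
    ring
  · simp only [eval_dirDeriv] at hE hI
    refine (hhess v hv hE hI).trans_eq ?_
    rw [eval_dirDeriv_dirDeriv]
    simp only [lagrangian, map_sub, map_sum, pderiv_C_mul, map_mul, eval_C, hessP]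

end Relaxations

theorem statement_2_general (n : ℕ) (E I : Finset ℕ) (c : ℕ → RPoly n) (f : RPoly n)
    (hK : (Kset E I c).Nonempty) (harch : ArchimedeanQM E I c)
    (hkkt : ∀ u : Fin n → ℝ,
      (u ∈ Kset E I c ∧ ∀ x ∈ Kset E I c, eval u f ≤ eval x f) → StrictKKTAt E I c f u) :
    ∃ k1 : ℕ, ∀ k : ℕ, k1 ≤ k →
      ∀ w : (Fin n →₀ ℕ) → ℝ,
        (w 0 = 1 ∧ MomRelaxPSD E c I c k w) →
        (∀ w' : (Fin n →₀ ℕ) → ℝ, (w' 0 = 1 ∧ MomRelaxPSD E c I c k w') →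
          pairing f w ≤ pairing f w') →
        HasFlatTruncation (max ((f.totalDegree + 1) / 2) (dKOrig E I c))
          (dKOrig E I c) k w := by
  obtain ⟨d, hd⟩ := exists_eventually_forall_rank_momentMatrix_eq hK harch
    fun u hu humin => hkkt u ⟨hu, fun x hx => humin hx⟩
  set d₀ := max ((f.totalDegree + 1) / 2) (dKOrig E I c)
  obtain ⟨t, hd₀t, hdt⟩ : ∃ t, d₀ ≤ t ∧ d ≤ t - dKOrig E I c :=
    ⟨d₀ + d + dKOrig E I c, by lia, by lia⟩
  obtain ⟨k₁, hk₁⟩ := Filter.eventually_atTop.1 (hd _ t hdt (Nat.sub_le _ _))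
  exact ⟨max k₁ t, fun k hk w hw hmin =>
    ⟨t, hd₀t, le_of_max_le_right hk, hk₁ k (le_of_max_le_left hk) w ⟨hw, hmin⟩⟩⟩

/-- Theorem 3.3: for polynomial optimization over a nonempty set `K`,
under archimedeanness and the optimality conditions at every global minimizer of (POP),
every minimizer of the `k`th moment relaxation has a flat truncation for `k` large enough. -/
theorem statement_2
    (n : ℕ) (E I : Finset ℕ) (hEI : Disjoint E I) (c : ℕ → RPoly n) (f : RPoly n)
    (hK : (Kset E I c).Nonempty)
    -- archimedeanness of Ideal(c_eq) + QM(c_in)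
    (harch : ArchimedeanQM E I c)
    -- LICQC, SCC, SOSC at every global minimizer of (POP)
    (hopt : ∀ u : Fin n → ℝ,
      (u ∈ Kset E I c ∧ ∀ x ∈ Kset E I c, eval u f ≤ eval x f) →
      OptCondsAt E c I c f u) :
    ∃ k1 : ℕ, ∀ k : ℕ, k1 ≤ k →
      ∀ w : (Fin n →₀ ℕ) → ℝ,
        (w 0 = 1 ∧ MomRelaxPSD E c I c k w) →
        (∀ w' : (Fin n →₀ ℕ) → ℝ, (w' 0 = 1 ∧ MomRelaxPSD E c I c k w') →
          pairing f w ≤ pairing f w') →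
        HasFlatTruncation (max ((f.totalDegree + 1) / 2) (dKOrig E I c))
          (dKOrig E I c) k w := by
  exact statement_2_general n E I c f hK harch fun u hu => (hopt u hu).strictKKTAt
end

section
/- Suppose z = Σ_{t=1}^r λ̃_t·[(τ_t,v_t)]_d, where each λ̃_t ≥ 0, each (τ_t,v_t) ∈ K̃ with τ_t > 0, and z is feasible for (M̃). Put λ_t = λ̃_t·τ_t^d and u_t = v_t/τ_t for each t. Then each u_t ∈ K, the vector y = Σ_{t=1}^r λ_t·[u_t]_d is feasible for (M), and ⟨f̂,z⟩ = ⟨f,y⟩. Consequently, if in addition K is closed at infinity and z is a minimizer of (M̃), then y is a minimizer of (M). -/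
open MvPolynomial MeasureTheory

/-!
For `τ > 0`, a point `τ • (1, x)` of the unit sphere lies in `K̃` exactly when `x ∈ K`, and a
degree-`d` homogenization `p̂` takes there the value `τ ^ d * p(x)`. Hence moving an atom of weight
`λ` from `τ • (1, x)` to `x`, with new weight `λ τ ^ d`, changes no value `⟨p̂, z⟩ = ⟨p, y⟩`.

For optimality, every feasible `y'` of (M) comes from a feasible `z'` of (M̃) with the same value:
if `μ` represents `y'`, weight it by `‖(1, x)‖ ^ d`, which is `μ`-integrable because the pure
moments of degree `d` are finite, and push it forward under the central projection
`x ↦ ‖(1, x)‖⁻¹ • (1, x)`.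
-/

section Homogenization

variable {n : ℕ}

theorem mdeg_le_totalDegree {p : RPoly n} {α : Fin n →₀ ℕ} (hα : α ∈ p.support) :
    mdeg α ≤ p.totalDegree := by
  rw [mdeg, ← Finsupp.degree_eq_sum]
  exact le_totalDegree hα

theorem eval_smul_of_isHomogeneous {σ R : Type*} [CommSemiring R] {p : MvPolynomial σ R} {k : ℕ}
    (hp : p.IsHomogeneous k) (r : R) (x : σ → R) : eval (r • x) p = r ^ k * eval x p := by
  rw [eval_eq, eval_eq, Finset.mul_sum]
  refine Finset.sum_congr rfl fun α hα => ?_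
  have hdeg : ∑ i ∈ α.support, α i = k := by
    rw [← Finsupp.degree_apply, Finsupp.degree_eq_weight_one]
    exact hp (mem_support_iff.1 hα)
  simp only [Pi.smul_apply, smul_eq_mul, mul_pow, Finset.prod_mul_distrib,
    Finset.prod_pow_eq_pow_sum, hdeg]
  ring

theorem isHomogeneous_homogAux {p : RPoly n} {ℓ : ℕ} (hp : p.totalDegree ≤ ℓ) :
    (homogAux ℓ p).IsHomogeneous ℓ := by
  refine IsHomogeneous.sum _ _ _ fun α hα => isHomogeneous_monomial _ ?_
  have hαℓ : mdeg α ≤ ℓ := (mdeg_le_totalDegree hα).trans hp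
  rw [map_add, Finsupp.degree_single, Finsupp.degree_mapDomain, Finsupp.degree_eq_sum]
  exact Nat.sub_add_cancel hαℓ

/-- The point `(1, x)` of the affine chart `x_0 = 1`, representing `x` in homogeneous
coordinates. -/
def affineLift (x : Fin n → ℝ) : Fin (n + 1) → ℝ := Fin.cons 1 x

theorem smul_affineLift_div {τ : ℝ} (hτ : τ ≠ 0) (v : Fin n → ℝ) :
    τ • affineLift (fun i => v i / τ) = Fin.cons τ v := by
  ext i
  cases i using Fin.cases <;> simp [affineLift, mul_div_cancel₀ _ hτ]

theorem eval_affineLift_homogAux (ℓ : ℕ) (p : RPoly n) (x : Fin n → ℝ) :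
    eval (affineLift x) (homogAux ℓ p) = eval x p := by
  have eval_monomial_affineLift (k : ℕ) (α : Fin n →₀ ℕ) (r : ℝ) :
      eval (affineLift x) (monomial (Finsupp.single 0 k + Finsupp.mapDomain Fin.succ α) r) =
        r * ∏ i, x i ^ α i := by
    have hsucc : (Finsupp.mapDomain Fin.succ α).prod (fun i e => affineLift x i ^ e) =
        ∏ i, x i ^ α i := by
      rw [Finsupp.prod_mapDomain_index_inj (Fin.succ_injective n),
        Finsupp.prod_fintype _ _ fun _ => pow_zero _]
      simp only [affineLift, Fin.cons_succ]
    rw [eval_monomial, Finsupp.prod_add_index' (fun _ => pow_zero _) fun _ => pow_add _, hsucc]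
    simp [affineLift]
  simp only [homogAux, map_sum, eval_monomial_affineLift, eval_eq']

theorem eval_smul_affineLift_homogAux {p : RPoly n} {ℓ : ℕ} (hp : p.totalDegree ≤ ℓ) (τ : ℝ)
    (x : Fin n → ℝ) : eval (τ • affineLift x) (homogAux ℓ p) = τ ^ ℓ * eval x p := by
  rw [eval_smul_of_isHomogeneous (isHomogeneous_homogAux hp), eval_affineLift_homogAux]

theorem smul_affineLift_mem_Khom_iff {E I : Finset ℕ} {c : ℕ → RPoly n} {τ : ℝ}
    (hτ : 0 < τ) {x : Fin n → ℝ} :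
    τ • affineLift x ∈ Khom E I c ↔
      x ∈ Kset E I c ∧ ∑ i, (τ • affineLift x) i ^ 2 = 1 := by
  have hpow (k : ℕ) : 0 < τ ^ k := pow_pos hτ k
  have hτ0 : 0 ≤ (τ • affineLift x) 0 := by simpa [affineLift] using hτ.le
  simp only [Khom, Kset, Set.mem_ofPred_eq, homogenize, eval_smul_affineLift_homogAux le_rfl,
    mul_eq_zero, (hpow _).ne', false_or, mul_nonneg_iff_of_pos_left (hpow _), hτ0, and_true,
    and_assoc]

theorem isClosed_Khom (E I : Finset ℕ) (c : ℕ → RPoly n) : IsClosed (Khom E I c) := by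
  simp only [Khom, Set.ofPred_and, Set.ofPred_forall]
  refine .inter (isClosed_biInter fun j _ => ?_) (.inter (isClosed_biInter fun j _ => ?_)
    (.inter ?_ ?_))
  · exact isClosed_eq (MvPolynomial.continuous_eval _) continuous_const
  · exact isClosed_le continuous_const (MvPolynomial.continuous_eval _)
  · exact isClosed_eq (by fun_prop) continuous_const
  · exact isClosed_le continuous_const (continuous_apply 0)

theorem isCompact_Khom (E I : Finset ℕ) (c : ℕ → RPoly n) : IsCompact (Khom E I c) := by
  refine (isCompact_closedBall (0 : Fin (n + 1) → ℝ) 1).of_isClosed_subset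
    (isClosed_Khom E I c) fun x hx => ?_
  obtain ⟨-, -, hsphere, -⟩ := hx
  rw [mem_closedBall_zero_iff, pi_norm_le_iff_of_nonneg zero_le_one]
  intro i
  rw [Real.norm_eq_abs, ← sq_le_one_iff_abs_le_one, ← hsphere]
  exact Finset.single_le_sum (f := fun j => x j ^ 2) (fun j _ => sq_nonneg _) (Finset.mem_univ i)

end Homogenization

section Moments

variable {n : ℕ}

theorem pairing_eq_integral_eval {p : RPoly n} {μ : Measure (Fin n → ℝ)}
    {y : (Fin n →₀ ℕ) → ℝ}
    (hy : ∀ α ∈ p.support, Integrable (fun x => ∏ i, x i ^ α i) μ ∧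
      y α = ∫ x, (∏ i, x i ^ α i) ∂μ) :
    pairing p y = ∫ x, eval x p ∂μ := by
  simp only [pairing, eval_eq']
  rw [integral_finsetSum _ fun α hα => (hy α hα).1.const_mul _]
  refine Finset.sum_congr rfl fun α hα => ?_
  rw [integral_const_mul, (hy α hα).2]

theorem integrable_of_continuousOn_isCompact {X : Type*} [TopologicalSpace X]
    [T2Space X] [MeasurableSpace X] [OpensMeasurableSpace X] {μ : Measure X}
    [IsFiniteMeasureOnCompacts μ] {F : Type*} [NormedAddCommGroup F] {K : Set X} {g : X → F}
    (hg : ContinuousOn g K) (hK : IsCompact K) (hμ : μ Kᶜ = 0) : Integrable g μ := by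
  rw [← Measure.restrict_eq_self_of_ae_mem (s := K) (μ := μ) hμ]
  exact hg.integrableOn_compact hK

theorem MFeas.of_pairing_eq {n' m m1 d : ℕ} {a : Fin m → RPoly n} {a' : Fin m → RPoly n'}
    {b : Fin m → ℝ} {K : Set (Fin n → ℝ)} {K' : Set (Fin n' → ℝ)} {y : (Fin n →₀ ℕ) → ℝ}
    {y' : (Fin n' →₀ ℕ) → ℝ} (hy' : MFeas m1 d a' b K' y') (hy : InMomentCone d K y)
    (hpair : ∀ i, pairing (a' i) y' = pairing (a i) y) : MFeas m1 d a b K y :=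
  ⟨hy, fun i hi => hpair i ▸ hy'.2.1 i hi, fun i hi => hpair i ▸ hy'.2.2 i hi⟩

end Moments

section AtomicMoments

variable {n : ℕ} {ι : Type*} [Fintype ι]

/-- The moment sequence `∑ t, w t • [x t]` of the finitely atomic measure with weights `w t` at the
points `x t`, in all degrees. -/
def atomicMoments (w : ι → ℝ) (x : ι → Fin n → ℝ) (α : Fin n →₀ ℕ) : ℝ :=
  ∑ t, w t * ∏ i, x t i ^ α i

theorem pairing_atomicMoments (p : RPoly n) (w : ι → ℝ) (x : ι → Fin n → ℝ) :
    pairing p (atomicMoments w x) = ∑ t, w t * eval (x t) p := by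
  simp only [pairing, atomicMoments, eval_eq', Finset.mul_sum]
  rw [Finset.sum_comm]
  simp only [mul_left_comm]

theorem inMomentCone_atomicMoments (d : ℕ) {K : Set (Fin n → ℝ)} {w : ι → ℝ}
    (hw : ∀ t, 0 ≤ w t) {x : ι → Fin n → ℝ} (hx : ∀ t, x t ∈ K) :
    InMomentCone d K (atomicMoments w x) := by
  refine ⟨∑ t, ENNReal.ofReal (w t) • Measure.dirac (x t), ⟨?_⟩, ?_, fun α _ => ?_⟩
  · simp [Measure.finsetSum_apply]
  · simp [Measure.finsetSum_apply, hx]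
  · have hint : ∀ t ∈ Finset.univ, Integrable (fun x : Fin n → ℝ => ∏ i, x i ^ α i)
        (ENNReal.ofReal (w t) • Measure.dirac (x t)) := fun t _ =>
      (integrable_dirac enorm_lt_top).smul_measure ENNReal.ofReal_ne_top
    refine ⟨integrable_finsetSum_measure.2 hint, ?_⟩
    simp only [integral_finsetSum_measure hint, integral_smul_measure, integral_dirac,
      ENNReal.toReal_ofReal (hw _), smul_eq_mul, atomicMoments]

theorem pairing_homogAux_atomicMoments {d : ℕ} {p : RPoly n} (hp : p.totalDegree ≤ d)
    (w τ : ι → ℝ) (x : ι → Fin n → ℝ) :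
    pairing (homogAux d p) (atomicMoments w fun t => τ t • affineLift (x t)) =
      pairing p (atomicMoments (fun t => w t * τ t ^ d) x) := by
  simp only [pairing_atomicMoments, eval_smul_affineLift_homogAux hp, mul_assoc]

end AtomicMoments

section SphereLift

variable {n : ℕ}

/-- The Euclidean norm of `(1, x)`; `Fin (n + 1) → ℝ` itself carries the sup norm. -/
noncomputable def affineNorm (x : Fin n → ℝ) : ℝ := ‖WithLp.toLp 2 (affineLift x)‖

/-- The central projection of the affine chart `x_0 = 1` to the open upper half of the unit
sphere. -/
noncomputable def sphereLift (x : Fin n → ℝ) : Fin (n + 1) → ℝ :=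
  (affineNorm x)⁻¹ • affineLift x

theorem affineNorm_sq (x : Fin n → ℝ) : affineNorm x ^ 2 = ∑ i, affineLift x i ^ 2 :=
  EuclideanSpace.real_norm_sq_eq _

theorem affineNorm_pos (x : Fin n → ℝ) : 0 < affineNorm x := by
  refine norm_pos_iff.2 fun h => one_ne_zero (α := ℝ) ?_
  simpa [affineLift] using congrFun (congrArg WithLp.ofLp h) 0

@[fun_prop]
theorem continuous_affineLift : Continuous (affineLift (n := n)) := by
  unfold affineLift
  fun_prop

@[fun_prop]
theorem continuous_affineNorm : Continuous (affineNorm (n := n)) := by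
  unfold affineNorm
  fun_prop

theorem continuous_sphereLift : Continuous (sphereLift (n := n)) :=
  (continuous_affineNorm.inv₀ fun x => (affineNorm_pos x).ne').smul continuous_affineLift

theorem sum_sphereLift_sq (x : Fin n → ℝ) : ∑ i, sphereLift x i ^ 2 = 1 := by
  simp only [sphereLift, Pi.smul_apply, smul_eq_mul, mul_pow, ← Finset.mul_sum, ← affineNorm_sq]
  rw [← mul_pow, inv_mul_cancel₀ (affineNorm_pos x).ne', one_pow]

theorem sphereLift_mem_Khom {E I : Finset ℕ} {c : ℕ → RPoly n} {x : Fin n → ℝ}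
    (hx : x ∈ Kset E I c) : sphereLift x ∈ Khom E I c :=
  (smul_affineLift_mem_Khom_iff (inv_pos.2 (affineNorm_pos x))).2 ⟨hx, sum_sphereLift_sq x⟩

theorem integrable_affineNorm_pow {d : ℕ} {μ : Measure (Fin n → ℝ)} [IsFiniteMeasure μ]
    (hμ : ∀ i, Integrable (fun x => x i ^ d) μ) : Integrable (fun x => affineNorm x ^ d) μ := by
  rcases eq_or_ne d 0 with rfl | hd
  · simp
  have memLp_coord (i : Fin n) : MemLp (fun x : Fin n → ℝ => x i) d μ := by
    rw [← integrable_norm_rpow_iff (continuous_apply i).aestronglyMeasurable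
      (by exact_mod_cast hd) (by simp)]
    simpa using (hμ i).norm
  have memLp_affineLift : MemLp (fun x => WithLp.toLp 2 (affineLift x)) d μ := by
    refine .of_eval_piLp fun i => ?_
    cases i using Fin.cases with
    | zero => exact memLp_const 1
    | succ i => exact memLp_coord i
  exact memLp_affineLift.integrable_norm_pow hd

/-- The measure on the unit sphere obtained by weighting `μ` with `‖(1, x)‖ ^ d` and projecting
centrally; it pairs with degree-`d` homogenizations as `μ` does with the polynomials. -/
noncomputable def sphereLiftMeasure (d : ℕ) (μ : Measure (Fin n → ℝ)) :
    Measure (Fin (n + 1) → ℝ) :=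
  (μ.withDensity fun x => ENNReal.ofReal (affineNorm x ^ d)).map sphereLift

theorem isFiniteMeasure_sphereLiftMeasure {d : ℕ} {μ : Measure (Fin n → ℝ)}
    (hμ : Integrable (fun x => affineNorm x ^ d) μ) : IsFiniteMeasure (sphereLiftMeasure d μ) := by
  have := isFiniteMeasure_withDensity_ofReal hμ.2
  unfold sphereLiftMeasure
  infer_instance

theorem sphereLiftMeasure_compl_Khom (d : ℕ) {μ : Measure (Fin n → ℝ)} {E I : Finset ℕ}
    {c : ℕ → RPoly n} (hμ : μ (Kset E I c)ᶜ = 0) :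
    sphereLiftMeasure d μ (Khom E I c)ᶜ = 0 := by
  rw [sphereLiftMeasure, Measure.map_apply continuous_sphereLift.measurable
    (isClosed_Khom E I c).measurableSet.compl]
  refine measure_mono_null ?_ (withDensity_absolutelyContinuous μ _ hμ)
  exact Set.compl_subset_compl.2 fun x hx => sphereLift_mem_Khom hx

theorem integral_eval_homogAux_sphereLiftMeasure {d : ℕ} (μ : Measure (Fin n → ℝ)) {p : RPoly n}
    (hp : p.totalDegree ≤ d) :
    ∫ x, eval x (homogAux d p) ∂sphereLiftMeasure d μ = ∫ x, eval x p ∂μ := by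
  rw [sphereLiftMeasure, integral_map continuous_sphereLift.aemeasurable
      (MvPolynomial.continuous_eval _).aestronglyMeasurable,
    integral_withDensity_eq_integral_toReal_smul (by fun_prop) (by simp)]
  congr 1 with x
  have hx : 0 < affineNorm x := affineNorm_pos x
  rw [sphereLift, eval_smul_affineLift_homogAux hp, ENNReal.toReal_ofReal (by positivity),
    smul_eq_mul, inv_pow, mul_inv_cancel_left₀ (by positivity)]

theorem exists_inMomentCone_Khom {d : ℕ} {E I : Finset ℕ} {c : ℕ → RPoly n}
    {y : (Fin n →₀ ℕ) → ℝ} (hy : InMomentCone d (Kset E I c) y) :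
    ∃ z : (Fin (n + 1) →₀ ℕ) → ℝ, InMomentCone d (Khom E I c) z ∧
      ∀ p : RPoly n, p.totalDegree ≤ d → pairing (homogAux d p) z = pairing p y := by
  obtain ⟨μ, hfinite, hK, hmoments⟩ := hy
  have hpure (i : Fin n) : Integrable (fun x => x i ^ d) μ := by
    have hdeg : mdeg (Finsupp.single i d) = d := by
      rw [mdeg, ← Finsupp.degree_eq_sum, Finsupp.degree_single]
    simpa [Finsupp.single_apply, pow_ite] using (hmoments (Finsupp.single i d) hdeg.le).1
  have : IsFiniteMeasure (sphereLiftMeasure d μ) :=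
    isFiniteMeasure_sphereLiftMeasure (integrable_affineNorm_pow hpure)
  have hKhom : sphereLiftMeasure d μ (Khom E I c)ᶜ = 0 := sphereLiftMeasure_compl_Khom d hK
  have hint (α : Fin (n + 1) →₀ ℕ) :
      Integrable (fun x => ∏ i, x i ^ α i) (sphereLiftMeasure d μ) :=
    integrable_of_continuousOn_isCompact (by fun_prop) (isCompact_Khom E I c) hKhom
  refine ⟨fun α => ∫ x, ∏ i, x i ^ α i ∂sphereLiftMeasure d μ,
    ⟨_, this, hKhom, fun α _ => ⟨hint α, rfl⟩⟩, fun p hp => ?_⟩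
  rw [pairing_eq_integral_eval fun α _ => ⟨hint α, rfl⟩,
    integral_eval_homogAux_sphereLiftMeasure μ hp,
    pairing_eq_integral_eval fun α hα => hmoments α ((mdeg_le_totalDegree hα).trans hp)]

end SphereLift

theorem le_pairing_of_forall_le_pairing_homogAux {n m m1 d : ℕ} {f : RPoly n}
    {a : Fin m → RPoly n} {b : Fin m → ℝ} {E I : Finset ℕ} {c : ℕ → RPoly n}
    (hf : f.totalDegree ≤ d) (ha : ∀ i, (a i).totalDegree ≤ d) {B : ℝ}
    (hB : ∀ z, MFeas m1 d (fun i => homogAux d (a i)) b (Khom E I c) z →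
      B ≤ pairing (homogAux d f) z)
    {y : (Fin n →₀ ℕ) → ℝ} (hy : MFeas m1 d a b (Kset E I c) y) : B ≤ pairing f y := by
  obtain ⟨z, hz, hpair⟩ := exists_inMomentCone_Khom hy.1
  rw [← hpair f hf]
  exact hB z (hy.of_pairing_eq hz fun i => (hpair (a i) (ha i)).symm)

theorem statement_5_general {n m m1 d : ℕ} {f : RPoly n} {a : Fin m → RPoly n} {b : Fin m → ℝ}
    {E I : Finset ℕ} {c : ℕ → RPoly n}
    (hf : f.totalDegree ≤ d) (ha : ∀ i, (a i).totalDegree ≤ d)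
    {ι : Type*} [Fintype ι] {lam τ : ι → ℝ} {v : ι → Fin n → ℝ}
    (hlam : ∀ t, 0 ≤ lam t) (hτ : ∀ t, 0 < τ t)
    (hKt : ∀ t, (Fin.cons (τ t) (v t) : Fin (n + 1) → ℝ) ∈ Khom E I c)
    {z : (Fin (n + 1) →₀ ℕ) → ℝ} (hz : z = atomicMoments lam fun t => Fin.cons (τ t) (v t))
    (hzfeas : MFeas m1 d (fun i => homogAux d (a i)) b (Khom E I c) z)
    {u : ι → Fin n → ℝ} (hu : ∀ t, u t = fun i => v t i / τ t)
    {y : (Fin n →₀ ℕ) → ℝ} (hy : y = atomicMoments (fun t => lam t * τ t ^ d) u) :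
    (∀ t, u t ∈ Kset E I c) ∧
    MFeas m1 d a b (Kset E I c) y ∧
    pairing (homogAux d f) z = pairing f y ∧
    ((∀ z', MFeas m1 d (fun i => homogAux d (a i)) b (Khom E I c) z' →
        pairing (homogAux d f) z ≤ pairing (homogAux d f) z') →
      ∀ y', MFeas m1 d a b (Kset E I c) y' → pairing f y ≤ pairing f y') := by
  have hcons (t : ι) : Fin.cons (τ t) (v t) = τ t • affineLift (u t) := by
    rw [hu, smul_affineLift_div (hτ t).ne']
  simp only [hcons] at hKt hz
  have huK (t : ι) : u t ∈ Kset E I c := ((smul_affineLift_mem_Khom_iff (hτ t)).1 (hKt t)).1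
  have hcone : InMomentCone d (Kset E I c) y :=
    hy ▸ inMomentCone_atomicMoments d (fun t => mul_nonneg (hlam t) (pow_pos (hτ t) d).le) huK
  have hpair (p : RPoly n) (hp : p.totalDegree ≤ d) :
      pairing (homogAux d p) z = pairing p y := by
    rw [hz, hy, pairing_homogAux_atomicMoments hp]
  refine ⟨huK, hzfeas.of_pairing_eq hcone fun i => hpair _ (ha i), hpair f hf,
    fun hmin y' hy' => ?_⟩
  rw [← hpair f hf]
  exact le_pairing_of_forall_le_pairing_homogAux hf ha hmin hy'

/-- Remark 4.2: dehomogenization of an atomic feasible point of (M̃)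
gives a feasible point of (M) with the same objective value; if moreover `K` is
closed at infinity and `z` is a minimizer of (M̃), then `y` is a minimizer of (M). -/
theorem statement_5
    (n m m1 d : ℕ) (hm1 : m1 ≤ m)
    (f : RPoly n) (a : Fin m → RPoly n) (b : Fin m → ℝ)
    (E I : Finset ℕ) (hEI : Disjoint E I) (c : ℕ → RPoly n)
    (hf : f.totalDegree ≤ d) (ha : ∀ i, (a i).totalDegree ≤ d)
    (r : ℕ) (lam : Fin r → ℝ) (τ : Fin r → ℝ) (v : Fin r → (Fin n → ℝ))
    (hlam : ∀ t, 0 ≤ lam t) (hτ : ∀ t, 0 < τ t)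
    (hKt : ∀ t, (Fin.cons (τ t) (v t) : Fin (n + 1) → ℝ) ∈ Khom E I c)
    -- z = ∑_t λ̃_t [(τ_t, v_t)]_d
    (z : (Fin (n + 1) →₀ ℕ) → ℝ)
    (hz : z = fun α : Fin (n + 1) →₀ ℕ =>
      ∑ t, lam t * ∏ i, (Fin.cons (τ t) (v t) : Fin (n + 1) → ℝ) i ^ α i)
    -- z is feasible for (M̃)
    (hzfeas : MFeas m1 d (fun i => homogAux d (a i)) b (Khom E I c) z)
    -- λ_t = λ̃_t τ_t^d, u_t = v_t / τ_t
    (u : Fin r → (Fin n → ℝ)) (hu : ∀ t, u t = fun i => v t i / τ t)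
    -- y = ∑_t λ_t [u_t]_d
    (y : (Fin n →₀ ℕ) → ℝ)
    (hy : y = fun α : Fin n →₀ ℕ =>
      ∑ t, (lam t * τ t ^ d) * ∏ i, u t i ^ α i) :
    (∀ t, u t ∈ Kset E I c) ∧
    MFeas m1 d a b (Kset E I c) y ∧
    pairing (homogAux d f) z = pairing f y ∧
    (ClosedAtInfinity E I c →
      (∀ z' : (Fin (n + 1) →₀ ℕ) → ℝ,
        MFeas m1 d (fun i => homogAux d (a i)) b (Khom E I c) z' →
        pairing (homogAux d f) z ≤ pairing (homogAux d f) z') →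
      (∀ y' : (Fin n →₀ ℕ) → ℝ, MFeas m1 d a b (Kset E I c) y' →
        pairing f y ≤ pairing f y')) := by
  obtain ⟨huK, hyfeas, hvalue, hmin⟩ := statement_5_general hf ha hlam hτ hKt hz hzfeas hu hy
  exact ⟨huK, hyfeas, hvalue, fun _ => hmin⟩
end
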